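/- arXiv:1903.04187 — 2 statements merged into one kernel-verified Lean document; each statement's English description precedes it below -/
import Mathlib

section
/- Let α₁₀, α₂₀ : ℝ² → ℂ be Schwartz functions. Then there exists exactly one pair (α₁, α₂) of smooth functions ℝ² × [0,∞) → ℂ such that: (i) for every T ≥ 0 the maps X ↦ α₁(X,T) and X ↦ α₂(X,T) are Schwartz functions; (ii) (α₁, α₂) satisfies the Dirac system with varying mass at every point of ℝ² × [0,∞); and (iii) α₁(X, 0) = α₁₀(X) and α₂(X, 0) = α₂₀(X) for all X ∈ ℝ². -/
noncomputable section

/-- Points of the plane. -/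
abbrev Vec : Type := Fin 2 → ℝ

/-- The partial derivative ∂ᵢ of a ℂ-valued function on ℝ². -/
def pd (i : Fin 2) (f : Vec → ℂ) : Vec → ℂ := fun x => fderiv ℝ f x (Pi.single i 1)

/-- The Dirac system with varying mass:
i∂_Tα₁ − (v_F/(2√E_D))(i∂_{X₁} − ∂_{X₂})α₂ + (ϑκ(X)/(2√E_D))α₁ = 0 and
i∂_Tα₂ − (v_F/(2√E_D))(i∂_{X₁} + ∂_{X₂})α₁ − (ϑκ(X)/(2√E_D))α₂ = 0,
at every point of ℝ² × [0,∞). -/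
def DiracSystem (ED vF ϑ : ℝ) (κ : Vec → ℝ) (α₁ α₂ : Vec → ℝ → ℂ) : Prop :=
  ∀ X : Vec, ∀ T : ℝ, 0 ≤ T →
    (Complex.I * deriv (α₁ X) T
        - ((vF / (2 * Real.sqrt ED) : ℝ) : ℂ) *
            (Complex.I * pd 0 (fun Y => α₂ Y T) X - pd 1 (fun Y => α₂ Y T) X)
        + (((ϑ * κ X) / (2 * Real.sqrt ED) : ℝ) : ℂ) * α₁ X T = 0)
    ∧
    (Complex.I * deriv (α₂ X) T
        - ((vF / (2 * Real.sqrt ED) : ℝ) : ℂ) *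
            (Complex.I * pd 0 (fun Y => α₁ Y T) X + pd 1 (fun Y => α₁ Y T) X)
        - (((ϑ * κ X) / (2 * Real.sqrt ED) : ℝ) : ℂ) * α₂ X T = 0)

/-- `IsSol` bundles the requirements on a pair (α₁, α₂):
smoothness on ℝ² × [0,∞), Schwartz class in X for each fixed T ≥ 0,
the Dirac system with varying mass, and the initial condition. -/
def IsSol (ED vF ϑ : ℝ) (κ : Vec → ℝ) (α₁₀ α₂₀ : SchwartzMap Vec ℂ)
    (α₁ α₂ : Vec → ℝ → ℂ) : Prop :=
  ContDiffOn ℝ (⊤ : ℕ∞) (fun p : Vec × ℝ => α₁ p.1 p.2) (Set.univ ×ˢ Set.Ici 0) ∧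
  ContDiffOn ℝ (⊤ : ℕ∞) (fun p : Vec × ℝ => α₂ p.1 p.2) (Set.univ ×ˢ Set.Ici 0) ∧
  (∀ T : ℝ, 0 ≤ T →
      (∃ g : SchwartzMap Vec ℂ, ∀ X, g X = α₁ X T) ∧
      (∃ g : SchwartzMap Vec ℂ, ∀ X, g X = α₂ X T)) ∧
  DiracSystem ED vF ϑ κ α₁ α₂ ∧
  (∀ X : Vec, α₁ X 0 = α₁₀ X ∧ α₂ X 0 = α₂₀ X)

/-!
Solved for the time derivative, the Dirac system reads `∂_T w = σ₁ ∂₁ w + σ₂ ∂₂ w + m J w` for the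
spinor `w = (α₁, α₂)`, where `σ₁, σ₂` are symmetric and `J` is skew for the real inner product of
`ℂ²`, and `m = ϑ κ / (2 √E_D)` is smooth with bounded derivatives. So it is a symmetric hyperbolic
system.

Existence. The topology of the Schwartz space is given by the weighted Sobolev seminorms `q k`,
built from the `L²` norm and the operators `xⱼ`, `∂ⱼ` (`q_withSeminorms`). Replacing `∂ⱼ` by the
central difference quotient of step `h` gives a generator `opGh` that is bounded in every `q k`, so
its exponential series converges and defines a flow (`exists_flow`). This generator is still skew in
`L²` (`inner_Gh`), and its commutators with `xⱼ` and `∂ⱼ` are bounded uniformly in `h`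
(`comm_bound`), so Grönwall's inequality gives bounds in every `q k` that are uniform in `h`
(`energy`). As `opGh` differs from the true generator `opG` by `O(h)` after a loss of derivatives
(`Gh_sub_q`), the flows for `h = 2⁻ⁿ` converge to a solution with values in the Schwartz space
(`exists_evolution`), defined for all real times; `contDiff_of_WD` shows that it is smooth in
`(X, T)`.

Uniqueness. The difference `w` of two solutions has zero initial data. For a smooth increasing `ψ`
that vanishes exactly on `(-∞, 0]`, the energy `∫ ψ(r² - l T - |X|²) ‖w‖² dX` is nonincreasing as
soon as `l ≥ 4 r maxⱼ ‖σⱼ‖`, since the terms with derivatives of `w` form a divergence. It is zero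
at `T = 0`, hence always, and `r` can be chosen so that the weight is positive at any given point
(`dirac_unique`). No bound on `w` at infinity is needed.
-/

open SchwartzMap MeasureTheory Filter Set
open scoped Topology ContDiff

variable {V : Type} [NormedAddCommGroup V] [InnerProductSpace ℝ V]

/-! ### Basic operators on the Schwartz space -/

/-- The standard basis vector `eⱼ` of the plane. -/
def eb (j : Fin 2) : Vec := Pi.single j 1

lemma norm_eb (j : Fin 2) : ‖eb j‖ = 1 := by simp [eb, Pi.norm_single]

lemma coord_growth (j : Fin 2) : (fun x : Vec => x j).HasTemperateGrowth :=
  (ContinuousLinearMap.proj (R := ℝ) (φ := fun _ : Fin 2 => ℝ) j).hasTemperateGrowth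

/-- Multiplication by the coordinate `xⱼ`. -/
def opX (j : Fin 2) : 𝓢(Vec, V) →L[ℝ] 𝓢(Vec, V) := smulLeftCLM V (fun x : Vec => x j)

/-- The partial derivative `∂ⱼ`. -/
def opP (j : Fin 2) : 𝓢(Vec, V) →L[ℝ] 𝓢(Vec, V) :=
  SchwartzMap.evalCLM ℝ Vec V (eb j) ∘L fderivCLM ℝ Vec V

/-- Translation `u ↦ u (· - a)`. -/
def opT (a : Vec) : 𝓢(Vec, V) →L[ℝ] 𝓢(Vec, V) := compSubConstCLM ℝ a

/-- Pointwise application of a linear map `s` of the target space. -/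
def opS (s : V →L[ℝ] V) : 𝓢(Vec, V) →L[ℝ] 𝓢(Vec, V) := postcompCLM s

/-- Multiplication by the scalar function `b`; meaningful only when `b` has temperate growth
(`smulLeftCLM` is zero otherwise), in particular when `Mult b` holds. -/
def opM (b : Vec → ℝ) : 𝓢(Vec, V) →L[ℝ] 𝓢(Vec, V) := smulLeftCLM V b

lemma opX_apply (j : Fin 2) (u : 𝓢(Vec, V)) (x : Vec) : opX j u x = x j • u x :=
  smulLeftCLM_apply_apply (coord_growth j) u x

lemma opP_apply (j : Fin 2) (u : 𝓢(Vec, V)) (x : Vec) : opP j u x = fderiv ℝ u x (eb j) := rfl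

lemma opT_apply (a : Vec) (u : 𝓢(Vec, V)) (x : Vec) : opT a u x = u (x - a) :=
  compSubConstCLM_apply u a x

lemma opS_apply (s : V →L[ℝ] V) (u : 𝓢(Vec, V)) (x : Vec) : opS s u x = s (u x) := rfl

/-- Smooth functions all of whose derivatives are bounded. -/
structure Mult (b : Vec → ℝ) : Prop where
  smooth : ContDiff ℝ ∞ b
  bdd : ∀ k : ℕ, ∃ C : ℝ, ∀ x : Vec, ‖iteratedFDeriv ℝ k b x‖ ≤ C

lemma Mult.growth {b : Vec → ℝ} (hb : Mult b) : b.HasTemperateGrowth := by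
  refine ⟨hb.smooth, fun n => ?_⟩
  obtain ⟨C, hC⟩ := hb.bdd n
  exact ⟨0, C, fun x => by simpa using hC x⟩

lemma opM_apply {b : Vec → ℝ} (hb : Mult b) (u : 𝓢(Vec, V)) (x : Vec) : opM b u x = b x • u x :=
  smulLeftCLM_apply_apply hb.growth u x

lemma Mult.pd {b : Vec → ℝ} (hb : Mult b) (j : Fin 2) :
    Mult (fun x => fderiv ℝ b x (eb j)) := by
  have h1 : ContDiff ℝ ∞ (fderiv ℝ b) := hb.smooth.fderiv_right (by simp)
  refine ⟨h1.clm_apply contDiff_const, fun k => ?_⟩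
  obtain ⟨C, hC⟩ := hb.bdd (k + 1)
  refine ⟨‖ContinuousLinearMap.apply ℝ ℝ (eb j)‖ * C, fun x => ?_⟩
  have h2 := (ContinuousLinearMap.apply ℝ ℝ (eb j)).norm_iteratedFDeriv_comp_left
    (f := fderiv ℝ b) (x := x) (N := ∞) (n := k) h1.contDiffAt (by exact_mod_cast le_top)
  refine h2.trans ?_
  gcongr
  rw [norm_iteratedFDeriv_fderiv]
  exact hC x

/-! ### Commutation relations -/

lemma X_T (i : Fin 2) (a : Vec) (u : 𝓢(Vec, V)) :
    opX i (opT a u) = opT a (opX i u) + a i • opT a u := by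
  ext x
  simp [opX_apply, opT_apply, sub_smul]

lemma P_T (i : Fin 2) (a : Vec) (u : 𝓢(Vec, V)) : opP i (opT a u) = opT a (opP i u) := by
  ext x
  rw [opP_apply, opT_apply, opP_apply]
  have : (⇑(opT a u)) = fun y => u (y - a) := funext (opT_apply a u)
  rw [this, fderiv_comp_sub]

lemma X_S (i : Fin 2) (s : V →L[ℝ] V) (u : 𝓢(Vec, V)) : opX i (opS s u) = opS s (opX i u) := by
  ext x
  simp [opX_apply, opS_apply]

lemma P_S (i : Fin 2) (s : V →L[ℝ] V) (u : 𝓢(Vec, V)) : opP i (opS s u) = opS s (opP i u) := by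
  ext x
  rw [opP_apply, opS_apply, opP_apply]
  have : (⇑(opS s u)) = s ∘ u := rfl
  rw [this, fderiv_comp x s.differentiableAt u.differentiableAt]
  simp

lemma X_M (i : Fin 2) {b : Vec → ℝ} (hb : Mult b) (u : 𝓢(Vec, V)) :
    opX i (opM b u) = opM b (opX i u) := by
  ext x
  rw [opX_apply, opM_apply hb, opM_apply hb, opX_apply, smul_comm]

lemma P_M (i : Fin 2) {b : Vec → ℝ} (hb : Mult b) (u : 𝓢(Vec, V)) :
    opP i (opM b u) = opM b (opP i u) + opM (fun x => fderiv ℝ b x (eb i)) u := by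
  ext x
  have : (⇑(opM b u)) = fun y => b y • u y := funext (opM_apply hb u)
  rw [opP_apply, this, fderiv_fun_smul (hb.smooth.differentiable (by simp) x) u.differentiableAt]
  simp [opM_apply hb, opM_apply (hb.pd i), opP_apply]

lemma X_P (i j : Fin 2) (u : 𝓢(Vec, V)) :
    opX i (opP j u) = opP j (opX i u) - (if i = j then (1 : ℝ) else 0) • u := by
  ext x
  have : (⇑(opX i u)) = fun y => y i • u y := funext (opX_apply i u)
  have h2 : HasFDerivAt (fun y : Vec => y i)
      (ContinuousLinearMap.proj (R := ℝ) (φ := fun _ : Fin 2 => ℝ) i) x :=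
    (ContinuousLinearMap.proj (R := ℝ) (φ := fun _ : Fin 2 => ℝ) i).hasFDerivAt
  rw [sub_apply, opP_apply, this, (h2.fun_smul u.differentiableAt.hasFDerivAt).fderiv]
  by_cases hij : i = j <;> simp [opX_apply, opP_apply, eb, hij]

lemma P_P (i j : Fin 2) (u : 𝓢(Vec, V)) : opP i (opP j u) = opP j (opP i u) := by
  ext x
  have key : ∀ i j, opP i (opP j u) x = fderiv ℝ (fderiv ℝ u) x (eb i) (eb j) := by
    intro i j
    have h1 : DifferentiableAt ℝ (fderiv ℝ u) x :=
      ((u.smooth ⊤).fderiv_right (m := 1) (by norm_num; exact WithTop.coe_le_coe.2 (le_top : (2 : ℕ∞) ≤ ⊤))).differentiable (by simp) x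
    have : (⇑(opP j u)) = fun y => fderiv ℝ u y (eb j) := rfl
    rw [opP_apply, this, fderiv_clm_apply h1 (by fun_prop)]
    simp
  rw [key, key]
  have := ((u.smooth ⊤).contDiffAt (x := x)).isSymmSndFDerivAt (by simp; exact WithTop.coe_le_coe.2 (le_top : (2 : ℕ∞) ≤ ⊤))
  exact this _ _

/-! ### Weighted Sobolev seminorms -/

/-- The four generators of the weighted Sobolev scale: `xⱼ` and `∂ⱼ`. -/
def opZ : Fin 2 ⊕ Fin 2 → 𝓢(Vec, V) →L[ℝ] 𝓢(Vec, V)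
  | .inl j => opX j
  | .inr j => opP j

/-- The inclusion of the Schwartz space into `L²`. -/
def toL2 : 𝓢(Vec, V) →L[ℝ] Lp V 2 (volume : Measure Vec) := toLpCLM ℝ V 2 volume

/-- Weighted Sobolev seminorms: `q k u` is the sum, with multiplicities, of the `L²` norms of all
words of length at most `k` in `x₁, x₂, ∂₁, ∂₂` applied to `u`. -/
def q : ℕ → Seminorm ℝ 𝓢(Vec, V)
  | 0 => (normSeminorm ℝ (Lp V 2 (volume : Measure Vec))).comp toL2.toLinearMap
  | k + 1 => q k + ∑ z, (q k).comp (opZ z).toLinearMap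

lemma q_zero (u : 𝓢(Vec, V)) : q 0 u = ‖toL2 u‖ := rfl

lemma q_succ (k : ℕ) (u : 𝓢(Vec, V)) : q (k + 1) u = q k u + ∑ z, q k (opZ z u) := by
  have h : ∀ s : Finset (Fin 2 ⊕ Fin 2), (∑ z ∈ s, (q k).comp (opZ z).toLinearMap) u
      = ∑ z ∈ s, q k (opZ z u) := by
    intro s
    induction s using Finset.induction_on with
    | empty => simp
    | insert z s hz ih => rw [Finset.sum_insert hz, Finset.sum_insert hz, ← ih]; rfl
  rw [← h]
  rfl

lemma q_continuous (k : ℕ) : Continuous (fun u : 𝓢(Vec, V) => q k u) := by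
  induction k with
  | zero => exact (toL2 (V := V)).continuous.norm
  | succ k ih =>
    simp only [q_succ]
    exact ih.add (continuous_finsetSum _ fun z _ => ih.comp (opZ z).continuous)

lemma q_le_succ (k : ℕ) (u : 𝓢(Vec, V)) : q k u ≤ q (k + 1) u := by
  rw [q_succ]
  exact le_add_of_nonneg_right (Finset.sum_nonneg fun z _ => apply_nonneg _ _)

lemma q_Z_le (k : ℕ) (z) (u : 𝓢(Vec, V)) : q k (opZ z u) ≤ q (k + 1) u := by
  rw [q_succ]
  exact (Finset.single_le_sum (f := fun z => q k (opZ z u)) (fun z _ => apply_nonneg _ _)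
    (Finset.mem_univ z)).trans (le_add_of_nonneg_left (apply_nonneg _ _))

lemma q_X_le (k : ℕ) (j) (u : 𝓢(Vec, V)) : q k (opX j u) ≤ q (k + 1) u := q_Z_le k (.inl j) u
lemma q_P_le (k : ℕ) (j) (u : 𝓢(Vec, V)) : q k (opP j u) ≤ q (k + 1) u := q_Z_le k (.inr j) u

lemma q_mono {k l : ℕ} (h : k ≤ l) (u : 𝓢(Vec, V)) : q k u ≤ q l u :=
  monotone_nat_of_le_succ (f := fun k => q k u) (fun k => q_le_succ k u) h

lemma slice_bound (v : 𝓢(Vec, V)) : ∃ C : ℝ, ∀ x, ∀ i, ‖v x‖ ≤ C * (1 + (x i) ^ 2)⁻¹ := by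
  have h := fun x => one_add_le_sup_seminorm_apply (𝕜 := ℝ) (m := (2, 0)) (k := 2) (n := 0)
    le_rfl le_rfl v x
  refine ⟨2 ^ 2 * ((Finset.Iic (2, 0)).sup fun m => SchwartzMap.seminorm ℝ m.1 m.2) v,
    fun x i => ?_⟩
  have h1 := h x
  rw [norm_iteratedFDeriv_zero] at h1
  rw [← div_eq_mul_inv, le_div_iff₀ (by positivity), mul_comm]
  refine le_trans ?_ h1
  gcongr
  have h2 : |x i| ≤ ‖x‖ := norm_le_pi_norm x i
  nlinarith [abs_nonneg (x i), sq_abs (x i), norm_nonneg x]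

/-- Schwartz functions are integrable along lines parallel to a coordinate axis. -/
lemma slice_integrable (v : 𝓢(Vec, V)) (x : Vec) (i : Fin 2) :
    Integrable (fun s => v (Function.update x i s)) := by
  obtain ⟨C, hC⟩ := slice_bound v
  refine (integrable_inv_one_add_sq.const_mul C).mono' ?_ ?_
  · exact (v.continuous.comp (continuous_const.update i continuous_id)).aestronglyMeasurable
  · exact .of_forall fun s => by simpa using hC (Function.update x i s) i

/-- The fundamental theorem of calculus along a line parallel to the `i`-th axis. -/
lemma norm_le_slice [CompleteSpace V] (u : 𝓢(Vec, V)) (x : Vec) (i : Fin 2) :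
    ‖u x‖ ≤ ∫ s, ‖opP i u (Function.update x i s)‖ := by
  have hd : ∀ s, HasDerivAt (fun s => u (Function.update x i s))
      (opP i u (Function.update x i s)) s := by
    intro s
    exact (u.differentiableAt.hasFDerivAt (x := Function.update x i s)).comp_hasDerivAt s
      (hasDerivAt_update x i s)
  have hint := slice_integrable (opP i u) x i
  have ht : Tendsto (fun s => u (Function.update x i s)) atBot (𝓝 0) :=
    tendsto_zero_of_hasDerivAt_of_integrableOn_Iic (a := 0) (fun s _ => hd s)
      hint.integrableOn (slice_integrable u x i).integrableOn
  have h := integral_Iic_of_hasDerivAt_of_tendsto' (a := x i) (fun s _ => hd s)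
    hint.integrableOn ht
  rw [Function.update_eq_self, sub_zero] at h
  rw [← h]
  refine (norm_integral_le_integral_norm _).trans ?_
  exact setIntegral_le_integral hint.norm (.of_forall fun s => norm_nonneg _)

/-- Applying `norm_le_slice` in both variables bounds `u` by the `L¹` norm of `∂₂∂₁u`. -/
lemma norm_le_integral [CompleteSpace V] (u : 𝓢(Vec, V)) (x : Vec) :
    ‖u x‖ ≤ ∫ y, ‖opP 1 (opP 0 u) y‖ := by
  set f := opP 1 (opP 0 u)
  have hmp := (volume_preserving_finTwoArrow ℝ).symm
  have hint : Integrable (fun p : ℝ × ℝ => ‖f ![p.1, p.2]‖) := by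
    have := (hmp.integrable_comp_emb (MeasurableEquiv.measurableEmbedding _)).2
      (f.integrable (μ := volume)).norm
    exact this
  have h1 : ∫ y, ‖f y‖ = ∫ p : ℝ × ℝ, ‖f ![p.1, p.2]‖ :=
    (hmp.integral_comp (MeasurableEquiv.measurableEmbedding _) (fun y => ‖f y‖)).symm
  rw [h1, Measure.volume_eq_prod, integral_prod _ hint]
  refine (norm_le_slice u x 0).trans ?_
  refine integral_mono (slice_integrable _ x 0).norm hint.integral_prod_left fun s => ?_
  refine (norm_le_slice (opP 0 u) (Function.update x 0 s) 1).trans_eq ?_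
  congr 1
  ext y
  congr 2
  ext i
  fin_cases i <;> simp

lemma weight_memLp : MemLp (fun x : Vec => ∏ i, (1 + (x i) ^ 2)⁻¹) (ENNReal.ofReal 2) volume := by
  have hc : Continuous (fun x : Vec => ∏ i, (1 + (x i) ^ 2)⁻¹) :=
    continuous_finsetProd _ fun i _ => Continuous.inv₀ (by fun_prop) fun x => by positivity
  rw [show ENNReal.ofReal 2 = 2 by simp, memLp_two_iff_integrable_sq hc.aestronglyMeasurable]
  have h1 : Integrable (fun x : Vec => ∏ i, (1 + (x i) ^ 2)⁻¹) volume :=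
    Integrable.fintype_prod (f := fun _ (s : ℝ) => (1 + s ^ 2)⁻¹)
      (fun _ => integrable_inv_one_add_sq)
  refine h1.mono' (hc.pow 2).aestronglyMeasurable (.of_forall fun x => ?_)
  have h0 : 0 ≤ ∏ i, (1 + (x i) ^ 2)⁻¹ := Finset.prod_nonneg fun i _ => by positivity
  have h2 : ∏ i, (1 + (x i) ^ 2)⁻¹ ≤ 1 :=
    Finset.prod_le_one (fun i _ => by positivity) fun i _ => inv_le_one_of_one_le₀ (by nlinarith)
  rw [Real.norm_of_nonneg (by positivity)]
  nlinarith

/-- Cauchy–Schwarz against the weight `∏ (1 + xᵢ²)⁻¹`. -/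
lemma integral_norm_le : ∃ C : ℝ, 0 ≤ C ∧ ∀ f : 𝓢(Vec, V), ∫ y, ‖f y‖ ≤ C * q 4 f := by
  refine ⟨(∫ x : Vec, ‖∏ i, (1 + (x i) ^ 2)⁻¹‖ ^ (2 : ℝ)) ^ (1 / 2 : ℝ) * 4, by positivity,
    fun f => ?_⟩
  set f1 := f + opX 0 (opX 0 f) with hf1
  set g := f1 + opX 1 (opX 1 f1) with hg
  have hgx : ∀ x, g x = (∏ i, (1 + (x i) ^ 2)) • f x := by
    intro x
    simp only [hg, hf1, opX_apply, add_apply, Fin.prod_univ_two]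
    module
  have h1 : ∀ x, ‖f x‖ = ‖∏ i, (1 + (x i) ^ 2)⁻¹‖ * ‖g x‖ := by
    intro x
    have h0 : (∏ i, (1 + (x i) ^ 2)) ≠ 0 := Finset.prod_ne_zero_iff.2 fun i _ => by positivity
    rw [hgx, ← norm_smul, smul_smul, Finset.prod_inv_distrib, inv_mul_cancel₀ h0, one_smul]
  simp only [h1]
  have h5 := integral_mul_norm_le_Lp_mul_Lq (p := 2) (q := 2) (μ := (volume : Measure Vec))
    (by constructor <;> norm_num) weight_memLp (g.memLp (ENNReal.ofReal 2)).norm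
  simp only [norm_norm] at h5
  refine h5.trans ?_
  rw [mul_assoc]
  gcongr
  have h2 : (∫ a, ‖g a‖ ^ (2 : ℝ)) ^ (1 / 2 : ℝ) = q 0 g := by
    have := g.norm_toLp' (p := 2) (μ := volume) (by simp) (by simp)
    rw [q_zero]
    refine Eq.trans ?_ this.symm
    simp
  rw [h2]
  have e1 : q 2 f1 ≤ 2 * q 4 f := by
    have h3 := map_add_le_add (q 2) f (opX 0 (opX 0 f))
    have h4 := (q_X_le 2 0 (opX 0 f)).trans (q_X_le 3 0 f)
    have h5 := q_mono (show 2 ≤ 4 by norm_num) f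
    rw [← hf1] at h3
    linarith
  have h3 := map_add_le_add (q 0) f1 (opX 1 (opX 1 f1))
  have h4 := (q_X_le 0 1 (opX 1 f1)).trans (q_X_le 1 1 f1)
  have h5 := q_mono (show 0 ≤ 2 by norm_num) f1
  rw [← hg] at h3
  linarith

/-- A Sobolev embedding, obtained from `norm_le_integral` and `integral_norm_le`. -/
lemma sup_le_q [CompleteSpace V] :
    ∃ C : ℝ, 0 ≤ C ∧ ∀ (u : 𝓢(Vec, V)) x, ‖u x‖ ≤ C * q 6 u := by
  obtain ⟨C, hC, h⟩ := integral_norm_le (V := V)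
  refine ⟨C, hC, fun u x => (norm_le_integral u x).trans ((h _).trans ?_)⟩
  gcongr
  exact (q_P_le 4 1 _).trans (q_P_le 5 0 u)

lemma q_Xpow_le (k m : ℕ) (j) (u : 𝓢(Vec, V)) : q k ((opX j)^[m] u) ≤ q (k + m) u := by
  induction m generalizing u with
  | zero => simp
  | succ m ih =>
    rw [Function.iterate_succ_apply, ← add_assoc]
    refine (ih _).trans (q_X_le _ _ _)

lemma Xpow_apply (m : ℕ) (j) (u : 𝓢(Vec, V)) (x) : (opX j)^[m] u x = (x j) ^ m • u x := by
  induction m generalizing u with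
  | zero => simp
  | succ m ih =>
    rw [Function.iterate_succ_apply, ih, opX_apply, smul_smul, pow_succ]

lemma decay_le_q [CompleteSpace V] (m : ℕ) :
    ∃ C : ℝ, 0 ≤ C ∧ ∀ (u : 𝓢(Vec, V)) x, ‖x‖ ^ m * ‖u x‖ ≤ C * q (6 + m) u := by
  obtain ⟨C, hC, h⟩ := sup_le_q (V := V)
  refine ⟨C, hC, fun u x => ?_⟩
  have hj : ∃ j, ‖x‖ = ‖x j‖ := by
    obtain ⟨j, -, hj⟩ := Finset.exists_max_image Finset.univ (fun j => ‖x j‖) ⟨0, by simp⟩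
    exact ⟨j, le_antisymm ((pi_norm_le_iff_of_nonneg (norm_nonneg _)).2
      fun i => hj i (Finset.mem_univ _)) (norm_le_pi_norm x j)⟩
  obtain ⟨j, hj⟩ := hj
  have h1 := h ((opX j)^[m] u) x
  rw [Xpow_apply, norm_smul, norm_pow, ← hj] at h1
  refine h1.trans ?_
  gcongr
  exact q_Xpow_le 6 m j u

lemma fderiv_eq_sum (u : 𝓢(Vec, V)) : fderiv ℝ u = fun x =>
    ∑ j, (ContinuousLinearMap.smulRightL ℝ Vec V
      (ContinuousLinearMap.proj (R := ℝ) (φ := fun _ : Fin 2 => ℝ) j)) (opP j u x) := by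
  ext x v
  have hv : v = ∑ j, v j • eb j := by
    ext i
    simp [eb, Finset.sum_apply, Pi.single_apply]
  conv_lhs => rw [hv, map_sum]
  simp [opP_apply]

lemma seminorm_le_q [CompleteSpace V] (m n : ℕ) :
    ∃ (C : ℝ) (r : ℕ), 0 ≤ C ∧ ∀ u : 𝓢(Vec, V), SchwartzMap.seminorm ℝ m n u ≤ C * q r u := by
  suffices H : ∃ (C : ℝ) (r : ℕ), 0 ≤ C ∧ ∀ (u : 𝓢(Vec, V)) x,
      ‖x‖ ^ m * ‖iteratedFDeriv ℝ n u x‖ ≤ C * q r u by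
    obtain ⟨C, r, hC, h⟩ := H
    exact ⟨C, r, hC, fun u => seminorm_le_bound ℝ m n u (by positivity) (h u)⟩
  induction n with
  | zero =>
    obtain ⟨C, hC, h⟩ := decay_le_q (V := V) m
    exact ⟨C, _, hC, fun u x => by simpa using h u x⟩
  | succ n ih =>
    obtain ⟨C, r, hC, h⟩ := ih
    let A : Fin 2 → V →L[ℝ] Vec →L[ℝ] V := fun j => ContinuousLinearMap.smulRightL ℝ Vec V
      (ContinuousLinearMap.proj (R := ℝ) (φ := fun _ : Fin 2 => ℝ) j)
    refine ⟨∑ j, ‖A j‖ * C, r + 1, by positivity, fun u x => ?_⟩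
    rw [← norm_iteratedFDeriv_fderiv, fderiv_eq_sum]
    have hs : ∀ j, ContDiff ℝ n (fun x => A j (opP j u x)) := fun j =>
      (A j).contDiff.comp ((opP j u).smooth n)
    have e : iteratedFDeriv ℝ n (fun x => ∑ j, A j (opP j u x)) x
        = ∑ j, iteratedFDeriv ℝ n (fun x => A j (opP j u x)) x :=
      iteratedFDeriv_fun_sum_apply (fun j _ => (hs j).contDiffAt)
    change ‖x‖ ^ m * ‖iteratedFDeriv ℝ n (fun x => ∑ j, A j (opP j u x)) x‖ ≤ _
    rw [e, Finset.sum_mul]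
    refine (mul_le_mul_of_nonneg_left (norm_sum_le _ _) (by positivity)).trans ?_
    rw [Finset.mul_sum]
    refine Finset.sum_le_sum fun j _ => ?_
    have h1 := (A j).norm_iteratedFDeriv_comp_left (f := opP j u) (x := x) (N := ∞) (n := n)
      ((opP j u).smooth ⊤).contDiffAt (by exact_mod_cast le_top)
    calc _ ≤ ‖x‖ ^ m * (‖A j‖ * ‖iteratedFDeriv ℝ n (opP j u) x‖) := by gcongr; exact h1
      _ = ‖A j‖ * (‖x‖ ^ m * ‖iteratedFDeriv ℝ n (opP j u) x‖) := by ring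
      _ ≤ ‖A j‖ * (C * q r (opP j u)) := mul_le_mul_of_nonneg_left (h _ _) (by positivity)
      _ ≤ ‖A j‖ * (C * q (r + 1) u) := by gcongr; exact q_P_le _ _ _
      _ = _ := by ring

/-- The seminorms `q k` define the topology of the Schwartz space. -/
lemma q_withSeminorms [CompleteSpace V] : WithSeminorms (q (V := V)) := by
  refine (schwartz_withSeminorms ℝ Vec V).congr ?_ ?_
  · intro k
    obtain ⟨s, C, -, h⟩ := Seminorm.bound_of_continuous (schwartz_withSeminorms ℝ Vec V) (q k)
      (q_continuous k)
    exact ⟨s, C, h⟩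
  · refine Seminorm.IsBounded.of_real fun i => ?_
    obtain ⟨C, r, hC, h⟩ := seminorm_le_q (V := V) i.1 i.2
    exact ⟨{r}, C, fun u => by rw [Finset.sup_singleton]; exact h u⟩

lemma clm_le_q [CompleteSpace V] {F : Type*} [NormedAddCommGroup F] [NormedSpace ℝ F]
    (L : 𝓢(Vec, V) →L[ℝ] F) : ∃ (k : ℕ) (C : ℝ), 0 ≤ C ∧ ∀ u, ‖L u‖ ≤ C * q k u := by
  obtain ⟨s, C, -, h⟩ := Seminorm.bound_of_continuous (q_withSeminorms (V := V))
    ((normSeminorm ℝ F).comp L.toLinearMap) L.continuous.norm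
  refine ⟨s.sup id, C, C.2, fun u => (h u).trans ?_⟩
  change (C : ℝ) * (s.sup q) u ≤ _
  gcongr
  refine Seminorm.finset_sup_apply_le (apply_nonneg _ _) fun i hi => ?_
  exact q_mono (Finset.le_sup (f := id) hi) u

/-! ### Operator bounds and completeness -/

lemma toL2_ae (u : 𝓢(Vec, V)) : toL2 u =ᵐ[volume] u := u.coeFn_toLp 2 volume

lemma inner_toL2 (u v : 𝓢(Vec, V)) :
    inner ℝ (toL2 u) (toL2 v) = ∫ x, inner ℝ (u x) (v x) := by
  rw [L2.inner_def]
  refine integral_congr_ae ?_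
  filter_upwards [toL2_ae u, toL2_ae v] with x h1 h2
  rw [h1, h2]

lemma norm_toL2_sq (u : 𝓢(Vec, V)) : ‖toL2 u‖ ^ 2 = ∫ x, ‖u x‖ ^ 2 := by
  rw [← real_inner_self_eq_norm_sq, inner_toL2]
  simp

lemma q0_le {u v : 𝓢(Vec, V)} {c : ℝ} (h : ∀ x, ‖u x‖ ≤ c * ‖v x‖) : q 0 u ≤ c * q 0 v := by
  refine Lp.norm_le_mul_norm_of_ae_le_mul ?_
  filter_upwards [toL2_ae u, toL2_ae v] with x h1 h2
  change ‖(toL2 u) x‖ ≤ c * ‖(toL2 v) x‖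
  rw [h1, h2]
  exact h x

/-- To bound `q (k + 1) v` it suffices to bound `q k` of `v` and of the four `opZ z v`. -/
lemma q_succ_le {k : ℕ} {C : ℝ} {u v : 𝓢(Vec, V)} (h0 : q k v ≤ C * q (k + 1) u)
    (h1 : ∀ z, q k (opZ z v) ≤ C * q (k + 1) u) : q (k + 1) v ≤ 5 * C * q (k + 1) u := by
  rw [q_succ]
  have : ∑ z, q k (opZ z v) ≤ ∑ _z : Fin 2 ⊕ Fin 2, C * q (k + 1) u :=
    Finset.sum_le_sum fun z _ => h1 z
  rw [Finset.sum_const, Finset.card_univ, nsmul_eq_mul] at this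
  norm_num at this
  simp only [Fintype.sum_sum_type, Fin.sum_univ_two]
  linarith

/-- Translations by vectors of length at most one are uniformly bounded in each `q k`. -/
lemma q_T (k : ℕ) : ∃ C : ℝ, 0 ≤ C ∧ ∀ (a : Vec), ‖a‖ ≤ 1 → ∀ u : 𝓢(Vec, V),
    q k (opT a u) ≤ C * q k u := by
  induction k with
  | zero =>
    refine ⟨1, zero_le_one, fun a _ u => le_of_eq ?_⟩
    rw [one_mul, q_zero, q_zero, ← sq_eq_sq₀ (norm_nonneg _) (norm_nonneg _), norm_toL2_sq,
      norm_toL2_sq]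
    simp only [opT_apply]
    exact integral_sub_right_eq_self (fun x => ‖u x‖ ^ 2) a
  | succ k ih =>
    obtain ⟨C, hC, h⟩ := ih
    refine ⟨5 * (2 * C), by positivity, fun a ha u => ?_⟩
    have h0 : q k (opT a u) ≤ C * q (k + 1) u :=
      (h a ha u).trans (mul_le_mul_of_nonneg_left (q_le_succ k u) hC)
    have hq : 0 ≤ C * q (k + 1) u := mul_nonneg hC (apply_nonneg _ _)
    refine q_succ_le (by linarith) fun z => ?_
    have hz : q k (opT a (opZ z u)) ≤ C * q (k + 1) u :=
      (h a ha _).trans (mul_le_mul_of_nonneg_left (q_Z_le k z u) hC)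
    cases z with
    | inl i =>
      change q k (opX i (opT a u)) ≤ _
      rw [X_T]
      refine (map_add_le_add _ _ _).trans ?_
      rw [map_smul_eq_mul]
      have h1 : ‖a i‖ ≤ 1 := (norm_le_pi_norm a i).trans ha
      have h2 : ‖a i‖ * q k (opT a u) ≤ 1 * q k (opT a u) :=
        mul_le_mul_of_nonneg_right h1 (apply_nonneg _ _)
      change q k (opT a (opX i u)) ≤ _ at hz
      linarith
    | inr i =>
      change q k (opP i (opT a u)) ≤ _
      rw [P_T]
      change q k (opT a (opP i u)) ≤ _ at hz
      linarith

lemma q_S (k : ℕ) (s : V →L[ℝ] V) (u : 𝓢(Vec, V)) : q k (opS s u) ≤ ‖s‖ * q k u := by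
  induction k generalizing u with
  | zero => exact q0_le fun x => s.le_opNorm _
  | succ k ih =>
    rw [q_succ, q_succ, mul_add, Finset.mul_sum]
    refine add_le_add (ih u) (Finset.sum_le_sum fun z _ => ?_)
    cases z with
    | inl i => change q k (opX i (opS s u)) ≤ _; rw [X_S]; exact ih _
    | inr i => change q k (opP i (opS s u)) ≤ _; rw [P_S]; exact ih _

lemma q_M (k : ℕ) {b : Vec → ℝ} (hb : Mult b) : ∃ C : ℝ, 0 ≤ C ∧ ∀ u : 𝓢(Vec, V),
    q k (opM b u) ≤ C * q k u := by
  induction k generalizing b with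
  | zero =>
    obtain ⟨C, hC⟩ := hb.bdd 0
    refine ⟨C, (norm_nonneg _).trans (hC 0), fun u => q0_le fun x => ?_⟩
    rw [opM_apply hb, norm_smul]
    gcongr
    simpa using hC x
  | succ k ih =>
    obtain ⟨C, hC, h⟩ := ih hb
    choose C' hC' h' using fun i => ih (hb.pd i)
    have hs : ∀ i, C' i ≤ ∑ i, C' i := fun i =>
      Finset.single_le_sum (f := C') (fun i _ => hC' i) (Finset.mem_univ i)
    refine ⟨5 * (C + ∑ i, C' i), by
      have := Finset.sum_nonneg fun i (_ : i ∈ Finset.univ) => hC' i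
      positivity, fun u => ?_⟩
    have hS : 0 ≤ ∑ i, C' i := Finset.sum_nonneg fun i _ => hC' i
    have hq : 0 ≤ q (k + 1) u := apply_nonneg _ _
    have hq' : 0 ≤ (∑ i, C' i) * q (k + 1) u := mul_nonneg hS hq
    have h0 : q k (opM b u) ≤ C * q (k + 1) u :=
      (h u).trans (mul_le_mul_of_nonneg_left (q_le_succ k u) hC)
    refine q_succ_le (by rw [add_mul]; linarith) fun z => ?_
    have hz : q k (opM b (opZ z u)) ≤ C * q (k + 1) u :=
      (h _).trans (mul_le_mul_of_nonneg_left (q_Z_le k z u) hC)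
    rw [add_mul]
    cases z with
    | inl i =>
      change q k (opX i (opM b u)) ≤ _
      rw [X_M i hb]
      change q k (opM b (opX i u)) ≤ _ at hz
      linarith
    | inr i =>
      change q k (opP i (opM b u)) ≤ _
      rw [P_M i hb]
      change q k (opM b (opP i u)) ≤ _ at hz
      refine (map_add_le_add _ _ _).trans ?_
      have h3 := (h' i u).trans (mul_le_mul (hs i) (q_le_succ k u) (apply_nonneg _ _) hS)
      linarith

/-- Central difference quotient in direction `j` with step `h`. -/
def opD (j : Fin 2) (h : ℝ) : 𝓢(Vec, V) →L[ℝ] 𝓢(Vec, V) :=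
  (2 * h)⁻¹ • (opT (-(h • eb j)) - opT (h • eb j))

/-- Average of the two translates used in `opD`. -/
def opA (j : Fin 2) (h : ℝ) : 𝓢(Vec, V) →L[ℝ] 𝓢(Vec, V) :=
  (1 / 2 : ℝ) • (opT (-(h • eb j)) + opT (h • eb j))

lemma opD_eq (j : Fin 2) (h : ℝ) (u : 𝓢(Vec, V)) :
    opD j h u = (2 * h)⁻¹ • (opT (-(h • eb j)) u - opT (h • eb j) u) := rfl

lemma opA_eq (j : Fin 2) (h : ℝ) (u : 𝓢(Vec, V)) :
    opA j h u = (1 / 2 : ℝ) • (opT (-(h • eb j)) u + opT (h • eb j) u) := rfl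

lemma norm_h_eb {h : ℝ} (h0 : 0 < h) (h1 : h ≤ 1) (j : Fin 2) : ‖h • eb j‖ ≤ 1 := by
  rw [norm_smul, norm_eb, mul_one, Real.norm_of_nonneg h0.le]; exact h1

lemma q_A (k : ℕ) : ∃ C : ℝ, 0 ≤ C ∧ ∀ j h, 0 < h → h ≤ 1 → ∀ u : 𝓢(Vec, V),
    q k (opA j h u) ≤ C * q k u := by
  obtain ⟨C, hC, hT⟩ := q_T (V := V) k
  refine ⟨C, hC, fun j h h0 h1 u => ?_⟩
  rw [opA_eq, map_smul_eq_mul]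
  have e1 := hT _ (by rw [norm_neg]; exact norm_h_eb h0 h1 j) u
  have e2 := hT _ (norm_h_eb h0 h1 j) u
  have e3 := map_add_le_add (q k) (opT (-(h • eb j)) u) (opT (h • eb j) u)
  norm_num
  linarith

lemma q_D (k : ℕ) : ∃ C : ℝ, 0 ≤ C ∧ ∀ j h, 0 < h → h ≤ 1 → ∀ u : 𝓢(Vec, V),
    q k (opD j h u) ≤ C / h * q k u := by
  obtain ⟨C, hC, hT⟩ := q_T (V := V) k
  refine ⟨C, hC, fun j h h0 h1 u => ?_⟩
  rw [opD_eq, map_smul_eq_mul, Real.norm_of_nonneg (by positivity)]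
  have e1 := hT _ (by rw [norm_neg]; exact norm_h_eb h0 h1 j) u
  have e2 := hT _ (norm_h_eb h0 h1 j) u
  have e3 := map_sub_le_add (q k) (opT (-(h • eb j)) u) (opT (h • eb j) u)
  calc _ ≤ (2 * h)⁻¹ * (2 * (C * q k u)) := by gcongr; linarith
    _ = _ := by field_simp

lemma X_D (i j : Fin 2) {h : ℝ} (h0 : h ≠ 0) (u : 𝓢(Vec, V)) :
    opX i (opD j h u) = opD j h (opX i u) - (if i = j then (1 : ℝ) else 0) • opA j h u := by
  rw [opD_eq, opD_eq, opA_eq, map_smul, map_sub, X_T, X_T]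
  by_cases hij : i = j
  · subst hij
    simp only [eb, if_true, Pi.neg_apply, Pi.smul_apply, Pi.single_eq_same, smul_eq_mul]
    match_scalars <;> field_simp
  · simp [eb, hij]

lemma P_D (i j : Fin 2) (h : ℝ) (u : 𝓢(Vec, V)) : opP i (opD j h u) = opD j h (opP i u) := by
  simp only [opD_eq, map_smul, map_sub, P_T]

lemma X_A (i j : Fin 2) (h : ℝ) (u : 𝓢(Vec, V)) :
    opX i (opA j h u) = opA j h (opX i u) +
      (if i = j then h / 2 else 0) • (opT (h • eb j) u - opT (-(h • eb j)) u) := by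
  rw [opA_eq, opA_eq, map_smul, map_add, X_T, X_T]
  by_cases hij : i = j
  · subst hij
    simp only [eb, if_true, Pi.neg_apply, Pi.smul_apply, Pi.single_eq_same, smul_eq_mul]
    module
  · simp [eb, hij]

lemma P_A (i j : Fin 2) (h : ℝ) (u : 𝓢(Vec, V)) : opP i (opA j h u) = opA j h (opP i u) := by
  simp only [opA_eq, map_smul, map_add, P_T]

/-- A family that is absolutely summable in every Schwartz seminorm has a Schwartz pointwise sum. -/
lemma schwartz_tsum [CompleteSpace V] {ι : Type} (d : ι → 𝓢(Vec, V))
    (hd : ∀ m n, Summable fun i => SchwartzMap.seminorm ℝ m n (d i)) :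
    ∃ s : 𝓢(Vec, V), (∀ x, s x = ∑' i, d i x) ∧
      ∀ m n, SchwartzMap.seminorm ℝ m n s ≤ ∑' i, SchwartzMap.seminorm ℝ m n (d i) := by
  have hf : ∀ i, ContDiff ℝ ((⊤ : ℕ∞) : WithTop ℕ∞) (d i) := fun i => (d i).smooth ⊤
  have hv : ∀ k : ℕ, (k : ℕ∞) ≤ ⊤ → Summable fun i => SchwartzMap.seminorm ℝ 0 k (d i) :=
    fun k _ => hd 0 k
  have h'f : ∀ (k : ℕ) (i : ι) (x : Vec), (k : ℕ∞) ≤ ⊤ →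
      ‖iteratedFDeriv ℝ k (d i) x‖ ≤ SchwartzMap.seminorm ℝ 0 k (d i) :=
    fun k i x _ => SchwartzMap.norm_iteratedFDeriv_le_seminorm ℝ (d i) k x
  have hb : ∀ m n x, ‖x‖ ^ m * ‖iteratedFDeriv ℝ n (fun x => ∑' i, d i x) x‖
      ≤ ∑' i, SchwartzMap.seminorm ℝ m n (d i) := by
    intro m n x
    rw [iteratedFDeriv_tsum_apply hf hv h'f le_top]
    have hs : Summable fun i => ‖iteratedFDeriv ℝ n (d i) x‖ :=
      Summable.of_nonneg_of_le (fun _ => norm_nonneg _) (fun i => h'f n i x le_top) (hd 0 n)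
    calc _ ≤ ‖x‖ ^ m * ∑' i, ‖iteratedFDeriv ℝ n (d i) x‖ := by
          gcongr; exact norm_tsum_le_tsum_norm hs
      _ = ∑' i, ‖x‖ ^ m * ‖iteratedFDeriv ℝ n (d i) x‖ := (tsum_mul_left).symm
      _ ≤ _ := (hs.mul_left _).tsum_le_tsum (fun i => SchwartzMap.le_seminorm ℝ m n (d i) x)
          (hd m n)
  refine ⟨⟨fun x => ∑' i, d i x, contDiff_tsum hf hv h'f, fun m n => ⟨_, hb m n⟩⟩,
    fun x => rfl, fun m n => ?_⟩
  exact seminorm_le_bound ℝ m n _ (tsum_nonneg fun i => apply_nonneg _ _) (hb m n)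

/-- Completeness of the Schwartz space, in the form used below. -/
lemma schwartz_hasSum [CompleteSpace V] {ι : Type} (d : ι → 𝓢(Vec, V))
    (hd : ∀ k, Summable fun i => q k (d i)) : ∃ s : 𝓢(Vec, V), HasSum d s := by
  have hd' : ∀ m n, Summable fun i => SchwartzMap.seminorm ℝ m n (d i) := by
    intro m n
    obtain ⟨C, r, hC, h⟩ := seminorm_le_q (V := V) m n
    exact Summable.of_nonneg_of_le (fun _ => apply_nonneg _ _) (fun i => h _)
      ((hd r).mul_left C)
  obtain ⟨s, hs, -⟩ := schwartz_tsum d hd'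
  refine ⟨s, ?_⟩
  rw [HasSum, SummationFilter.unconditional_filter]
  rw [(schwartz_withSeminorms ℝ Vec V).tendsto_nhds]
  rintro ⟨m, n⟩ ε hε
  filter_upwards [(tendsto_order.1 (tendsto_tsum_compl_atTop_zero
    fun i => SchwartzMap.seminorm ℝ m n (d i))).2 ε hε] with t ht
  obtain ⟨s', hs', hle⟩ := schwartz_tsum (fun i : { i // i ∉ t } => d i)
    fun m n => (hd' m n).subtype _
  have e : ∑ i ∈ t, d i - s = - s' := by
    ext x
    have hx : Summable fun i => d i x := by
      refine Summable.of_norm_bounded (hd' 0 0) fun i => ?_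
      simpa using SchwartzMap.le_seminorm ℝ 0 0 (d i) x
    have := hx.sum_add_tsum_subtype_compl t
    rw [sub_apply, neg_apply, hs, hs', ← this, sum_apply]
    abel
  change SchwartzMap.seminorm ℝ m n _ < ε
  rw [e, map_neg_eq_map]
  exact (hle m n).trans_lt ht

/-! ### Consistency of the difference quotients -/

lemma q0_le_sup : ∃ (m : ℕ) (C : ℝ), 0 ≤ C ∧ ∀ (w : 𝓢(Vec, V)) (B : ℝ), 0 ≤ B →
    (∀ x, (1 + ‖x‖) ^ m * ‖w x‖ ≤ B) → q 0 w ≤ C * B := by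
  obtain ⟨m, C, hC, h⟩ := norm_toLp_le_seminorm (E := Vec) ℝ V 2 volume
  refine ⟨m, C, hC, fun w B hB hw => (h w).trans ?_⟩
  gcongr
  refine Seminorm.finset_sup_apply_le hB fun i hi => ?_
  obtain ⟨i1, i2⟩ := i
  have hi1 : i1 ≤ m := (Finset.mem_Iic.1 hi).1
  have hi2 : i2 = 0 := le_antisymm (Finset.mem_Iic.1 hi).2 (zero_le)
  subst hi2
  refine seminorm_le_bound ℝ _ _ w hB fun x => ?_
  rw [norm_iteratedFDeriv_zero]
  refine le_trans ?_ (hw x)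
  gcongr
  calc ‖x‖ ^ i1 ≤ (1 + ‖x‖) ^ i1 := by gcongr; linarith
    _ ≤ _ := pow_le_pow_right₀ (by linarith [norm_nonneg x]) hi1

lemma wsup_le_q [CompleteSpace V] (m : ℕ) : ∃ (C : ℝ) (r : ℕ), 0 ≤ C ∧ ∀ (u : 𝓢(Vec, V)) x,
    (1 + ‖x‖) ^ m * ‖u x‖ ≤ C * q r u := by
  obtain ⟨C1, hC1, h1⟩ := decay_le_q (V := V) 0
  obtain ⟨C2, hC2, h2⟩ := decay_le_q (V := V) m
  refine ⟨2 ^ m * (C1 + C2), 6 + m, by positivity, fun u x => ?_⟩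
  have e1 : ‖u x‖ ≤ C1 * q (6 + m) u := by
    have := h1 u x
    simp only [pow_zero, one_mul] at this
    exact this.trans (mul_le_mul_of_nonneg_left (q_mono (by lia) u) hC1)
  have e2 := h2 u x
  have e3 : (1 + ‖x‖) ^ m ≤ 2 ^ m * (1 + ‖x‖ ^ m) := by
    rcases le_total ‖x‖ 1 with h | h
    · calc (1 + ‖x‖) ^ m ≤ 2 ^ m := by gcongr; linarith
        _ ≤ _ := le_mul_of_one_le_right (by positivity) (by linarith [pow_nonneg (norm_nonneg x) m])
    · calc (1 + ‖x‖) ^ m ≤ (2 * ‖x‖) ^ m := by gcongr; linarith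
        _ = 2 ^ m * ‖x‖ ^ m := mul_pow _ _ _
        _ ≤ _ := by gcongr; linarith
  calc _ ≤ 2 ^ m * (1 + ‖x‖ ^ m) * ‖u x‖ := by gcongr
    _ = 2 ^ m * (‖u x‖ + ‖x‖ ^ m * ‖u x‖) := by ring
    _ ≤ 2 ^ m * (C1 * q (6 + m) u + C2 * q (6 + m) u) := by gcongr
    _ = _ := by ring

lemma line_deriv (u : 𝓢(Vec, V)) (j : Fin 2) (x : Vec) (s : ℝ) :
    HasDerivAt (fun s : ℝ => u (x + s • eb j)) (opP j u (x + s • eb j)) s := by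
  have h : HasDerivAt (fun s : ℝ => x + s • eb j) (eb j) s := by
    simpa using ((hasDerivAt_id s).smul_const (eb j)).const_add x
  exact (u.differentiableAt.hasFDerivAt (x := x + s • eb j)).comp_hasDerivAt s h

lemma weight_shift (m : ℕ) (x : Vec) (j : Fin 2) {s : ℝ} (hs : |s| ≤ 1) :
    (1 + ‖x‖) ^ m ≤ 2 ^ m * (1 + ‖x + s • eb j‖) ^ m := by
  rw [← mul_pow]
  gcongr
  have h1 : ‖x‖ ≤ ‖x + s • eb j‖ + ‖s • eb j‖ := by
    have := norm_sub_le (x + s • eb j) (s • eb j)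
    rwa [add_sub_cancel_right] at this
  rw [norm_smul, norm_eb, mul_one, Real.norm_eq_abs] at h1
  linarith [norm_nonneg (x + s • eb j)]

/-- First-order Taylor estimate for translations, with polynomial weights. -/
lemma shift_pt [CompleteSpace V] (m : ℕ) : ∃ (C : ℝ) (r : ℕ), 0 ≤ C ∧
    ∀ (j : Fin 2) (s : ℝ), |s| ≤ 1 → ∀ (v : 𝓢(Vec, V)) x,
    (1 + ‖x‖) ^ m * ‖v (x + s • eb j) - v x‖ ≤ C * |s| * q r v := by
  obtain ⟨C, r, hC, h⟩ := wsup_le_q (V := V) m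
  refine ⟨2 ^ m * C, r + 1, by positivity, fun j s hs v x => ?_⟩
  have hw : 0 < (1 + ‖x‖) ^ m := by positivity
  have key := Convex.norm_image_sub_le_of_norm_hasDerivWithin_le
    (C := 2 ^ m * C * q (r + 1) v / (1 + ‖x‖) ^ m)
    (s := Icc (-1 : ℝ) 1) (x := 0) (y := s)
    (fun t _ => (line_deriv v j x t).hasDerivWithinAt) (fun t ht => ?_) (convex_Icc _ _)
    (by simp) (abs_le.1 hs)
  · simp only [zero_smul, add_zero, sub_zero, Real.norm_eq_abs] at key
    calc _ ≤ (1 + ‖x‖) ^ m * (2 ^ m * C * q (r + 1) v / (1 + ‖x‖) ^ m * |s|) := by gcongr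
      _ = _ := by field_simp
  · rw [le_div_iff₀ hw, mul_comm]
    calc _ ≤ 2 ^ m * (1 + ‖x + t • eb j‖) ^ m * ‖opP j v (x + t • eb j)‖ := by
          gcongr; exact weight_shift m x j (abs_le.2 ht)
      _ = 2 ^ m * ((1 + ‖x + t • eb j‖) ^ m * ‖opP j v (x + t • eb j)‖) := by ring
      _ ≤ 2 ^ m * (C * q r (opP j v)) := by gcongr 2 ^ m * ?_; exact h _ _
      _ ≤ 2 ^ m * (C * q (r + 1) v) := by gcongr; exact q_P_le _ _ _
      _ = _ := by ring

/-- Consistency of the central difference quotient, with polynomial weights. -/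
lemma diff_pt [CompleteSpace V] (m : ℕ) : ∃ (C : ℝ) (r : ℕ), 0 ≤ C ∧
    ∀ (j : Fin 2) (h : ℝ), 0 < h → h ≤ 1 → ∀ (u : 𝓢(Vec, V)) x,
    (1 + ‖x‖) ^ m * ‖(opD j h u - opP j u) x‖ ≤ C * h * q r u := by
  obtain ⟨C, r, hC, H⟩ := shift_pt (V := V) m
  refine ⟨C, r + 1, hC, fun j h h0 h1 u x => ?_⟩
  have hw : 0 < (1 + ‖x‖) ^ m := by positivity
  have key := Convex.norm_image_sub_le_of_norm_hasDerivWithin_le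
    (C := C * h * q (r + 1) u / (1 + ‖x‖) ^ m)
    (s := Icc (-h) h) (x := -h) (y := h) (f := fun s : ℝ => u (x + s • eb j) - s • opP j u x)
    (f' := fun s => opP j u (x + s • eb j) - (1 : ℝ) • opP j u x)
    (fun t _ => ((line_deriv u j x t).sub
      ((hasDerivAt_id t).smul_const (opP j u x))).hasDerivWithinAt) (fun t ht => ?_)
      (convex_Icc _ _) (by simp [h0.le]) (by simp [h0.le])
  · have e : (opD j h u - opP j u) x = (2 * h)⁻¹ • ((u (x + h • eb j) - h • opP j u x) -
        (u (x + (-h) • eb j) - (-h) • opP j u x)) := by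
      rw [sub_apply, opD_eq, smul_apply, sub_apply, opT_apply, opT_apply, sub_neg_eq_add,
        neg_smul h (eb j), ← sub_eq_add_neg x]
      match_scalars <;> field_simp
      norm_num
    rw [e, norm_smul, Real.norm_of_nonneg (by positivity)]
    have e2 : ‖h - -h‖ = 2 * h := by rw [Real.norm_of_nonneg (by linarith)]; ring
    rw [e2] at key
    calc _ ≤ (1 + ‖x‖) ^ m * ((2 * h)⁻¹ * (C * h * q (r + 1) u / (1 + ‖x‖) ^ m * (2 * h))) := by
          gcongr
      _ = _ := by field_simp
  · rw [le_div_iff₀ hw, mul_comm, one_smul]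
    have ht' : |t| ≤ h := abs_le.2 ht
    refine (H j t (ht'.trans h1) (opP j u) x).trans ?_
    gcongr
    exact q_P_le _ _ _

lemma q_succ_le' {k : ℕ} {B : ℝ} {v : 𝓢(Vec, V)} (h0 : q k v ≤ B)
    (h1 : ∀ z, q k (opZ z v) ≤ B) : q (k + 1) v ≤ 5 * B := by
  rw [q_succ]
  have : ∑ z, q k (opZ z v) ≤ ∑ _z : Fin 2 ⊕ Fin 2, B :=
    Finset.sum_le_sum fun z _ => h1 z
  rw [Finset.sum_const, Finset.card_univ, nsmul_eq_mul] at this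
  norm_num at this
  simp only [Fintype.sum_sum_type, Fin.sum_univ_two]
  linarith

lemma norm_s_eb {s : ℝ} (hs : |s| ≤ 1) (j : Fin 2) : ‖s • eb j‖ ≤ 1 := by
  rw [norm_smul, norm_eb, mul_one]; exact hs

lemma shift_q [CompleteSpace V] (k : ℕ) : ∃ (C : ℝ) (r : ℕ), 0 ≤ C ∧
    ∀ (j : Fin 2) (s : ℝ), |s| ≤ 1 → ∀ (v : 𝓢(Vec, V)),
    q k (opT (s • eb j) v - v) ≤ C * |s| * q r v := by
  induction k with
  | zero =>
    obtain ⟨m, C0, hC0, h0⟩ := q0_le_sup (V := V)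
    obtain ⟨C, r, hC, h⟩ := shift_pt (V := V) m
    refine ⟨C0 * C, r, by positivity, fun j s hs v => ?_⟩
    have := h0 (opT (s • eb j) v - v) (C * |s| * q r v) (by positivity) fun x => by
      have := h j (-s) (by rwa [abs_neg]) v x
      rw [sub_apply, opT_apply, sub_eq_add_neg x, ← neg_smul]
      rwa [abs_neg] at this
    linarith
  | succ k ih =>
    obtain ⟨C, r, hC, h⟩ := ih
    obtain ⟨C', hC', h'⟩ := q_T (V := V) k
    set R := max (r + 1) k
    refine ⟨5 * (C + C'), R, by positivity, fun j s hs v => ?_⟩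
    have hr : q r v ≤ q R v := q_mono (by simp only [R]; lia) v
    have hR : 0 ≤ q R v := apply_nonneg _ _
    have hX : ∀ z, q k (opT (s • eb j) (opZ z v) - opZ z v) ≤ C * |s| * q R v := fun z =>
      (h j s hs _).trans (mul_le_mul_of_nonneg_left ((q_Z_le r z v).trans
        (q_mono (by simp only [R]; lia) v)) (by positivity))
    have hp : 0 ≤ C' * |s| * q R v := by positivity
    rw [show 5 * (C + C') * |s| * q R v = 5 * (C * |s| * q R v + C' * |s| * q R v) by ring]
    refine q_succ_le' ?_ fun z => ?_
    · refine (h j s hs v).trans ?_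
      have : C * |s| * q r v ≤ C * |s| * q R v := by gcongr
      linarith
    · have hz := hX z
      cases z with
      | inl i =>
        change q k (opX i (opT (s • eb j) v - v)) ≤ _
        change q k (opT (s • eb j) (opX i v) - opX i v) ≤ _ at hz
        rw [map_sub, X_T, add_sub_right_comm]
        refine (map_add_le_add _ _ _).trans ?_
        rw [map_smul_eq_mul]
        have e1 : ‖(s • eb j) i‖ ≤ |s| := by
          refine (norm_le_pi_norm _ i).trans ?_
          rw [norm_smul, norm_eb, mul_one]; rfl
        have e2 : q k (opT (s • eb j) v) ≤ C' * q R v :=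
          (h' _ (norm_s_eb hs j) v).trans (mul_le_mul_of_nonneg_left
            (q_mono (by simp only [R]; lia) v) hC')
        have e3 := mul_le_mul e1 e2 (apply_nonneg _ _) (abs_nonneg s)
        linarith
      | inr i =>
        change q k (opP i (opT (s • eb j) v - v)) ≤ _
        change q k (opT (s • eb j) (opP i v) - opP i v) ≤ _ at hz
        rw [map_sub, P_T]
        linarith

lemma A_sub_q [CompleteSpace V] (k : ℕ) : ∃ (C : ℝ) (r : ℕ), 0 ≤ C ∧
    ∀ (j : Fin 2) (h : ℝ), 0 < h → h ≤ 1 → ∀ (v : 𝓢(Vec, V)),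
    q k (opA j h v - v) ≤ C * h * q r v := by
  obtain ⟨C, r, hC, H⟩ := shift_q (V := V) k
  refine ⟨C, r, hC, fun j h h0 h1 v => ?_⟩
  have e1 := H j h (by rwa [abs_of_pos h0]) v
  have e2 := H j (-h) (by rwa [abs_neg, abs_of_pos h0]) v
  rw [abs_of_pos h0] at e1
  rw [abs_neg, abs_of_pos h0, neg_smul] at e2
  have e : opA j h v - v = (1 / 2 : ℝ) • ((opT (-(h • eb j)) v - v) + (opT (h • eb j) v - v)) := by
    rw [opA_eq]; module
  rw [e, map_smul_eq_mul]
  have e3 := map_add_le_add (q k) (opT (-(h • eb j)) v - v) (opT (h • eb j) v - v)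
  norm_num
  linarith

lemma D_sub_q [CompleteSpace V] (k : ℕ) : ∃ (C : ℝ) (r : ℕ), 0 ≤ C ∧
    ∀ (j : Fin 2) (h : ℝ), 0 < h → h ≤ 1 → ∀ (u : 𝓢(Vec, V)),
    q k (opD j h u - opP j u) ≤ C * h * q r u := by
  induction k with
  | zero =>
    obtain ⟨m, C0, hC0, h0⟩ := q0_le_sup (V := V)
    obtain ⟨C, r, hC, H⟩ := diff_pt (V := V) m
    refine ⟨C0 * C, r, by positivity, fun j h h0' h1 v => ?_⟩
    have := h0 (opD j h v - opP j v) (C * h * q r v) (by positivity) (H j h h0' h1 v)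
    linarith
  | succ k ih =>
    obtain ⟨C, r, hC, H⟩ := ih
    obtain ⟨C', r', hC', H'⟩ := A_sub_q (V := V) k
    set R := max (r + 1) r'
    refine ⟨5 * (C + C'), R, by positivity, fun j h h0 h1 v => ?_⟩
    have hr : q r v ≤ q R v := q_mono (by simp only [R]; lia) v
    have hR : 0 ≤ q R v := apply_nonneg _ _
    have hX : ∀ z, q k (opD j h (opZ z v) - opP j (opZ z v)) ≤ C * h * q R v := fun z =>
      (H j h h0 h1 _).trans (mul_le_mul_of_nonneg_left ((q_Z_le r z v).trans
        (q_mono (by simp only [R]; lia) v)) (by positivity))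
    have hA : q k (opA j h v - v) ≤ C' * h * q R v :=
      (H' j h h0 h1 v).trans (mul_le_mul_of_nonneg_left
        (q_mono (by simp only [R]; lia) v) (by positivity))
    have hp : 0 ≤ C' * h * q R v := by positivity
    rw [show 5 * (C + C') * h * q R v = 5 * (C * h * q R v + C' * h * q R v) by ring]
    refine q_succ_le' ?_ fun z => ?_
    · refine (H j h h0 h1 v).trans ?_
      have : C * h * q r v ≤ C * h * q R v := by gcongr
      linarith
    · have hz := hX z
      cases z with
      | inl i =>
        change q k (opX i (opD j h v - opP j v)) ≤ _
        change q k (opD j h (opX i v) - opP j (opX i v)) ≤ _ at hz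
        have e : opX i (opD j h v - opP j v) = (opD j h (opX i v) - opP j (opX i v))
            - (if i = j then (1 : ℝ) else 0) • (opA j h v - v) := by
          rw [map_sub, X_D i j h0.ne', X_P]; module
        rw [e]
        refine (map_sub_le_add _ _ _).trans ?_
        rw [map_smul_eq_mul]
        have e2 : ‖(if i = j then (1 : ℝ) else 0)‖ * q k (opA j h v - v) ≤
            1 * q k (opA j h v - v) :=
          mul_le_mul_of_nonneg_right (by split_ifs <;> simp) (apply_nonneg _ _)
        linarith
      | inr i =>
        change q k (opP i (opD j h v - opP j v)) ≤ _
        change q k (opD j h (opP i v) - opP j (opP i v)) ≤ _ at hz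
        rw [map_sub, P_D, P_P]
        linarith

/-- The generator `∑ⱼ σⱼ ∂ⱼ + m J` of the first-order system. -/
def opG (σ : Fin 2 → V →L[ℝ] V) (J : V →L[ℝ] V) (m : Vec → ℝ) : 𝓢(Vec, V) →L[ℝ] 𝓢(Vec, V) :=
  ∑ j, opS (σ j) ∘L opP j + opM m ∘L opS J

/-- The generator with `∂ⱼ` replaced by the central difference quotient of step `h`. -/
def opGh (σ : Fin 2 → V →L[ℝ] V) (J : V →L[ℝ] V) (m : Vec → ℝ) (h : ℝ) :
    𝓢(Vec, V) →L[ℝ] 𝓢(Vec, V) :=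
  ∑ j, opS (σ j) ∘L opD j h + opM m ∘L opS J

lemma opG_eq (σ : Fin 2 → V →L[ℝ] V) (J : V →L[ℝ] V) (m : Vec → ℝ) (u : 𝓢(Vec, V)) :
    opG σ J m u = ∑ j, opS (σ j) (opP j u) + opM m (opS J u) := by
  simp [opG]

lemma opGh_eq (σ : Fin 2 → V →L[ℝ] V) (J : V →L[ℝ] V) (m : Vec → ℝ) (h : ℝ) (u : 𝓢(Vec, V)) :
    opGh σ J m h u = ∑ j, opS (σ j) (opD j h u) + opM m (opS J u) := by
  simp [opGh]

/-- The discretised generator approximates the generator with error `O(h)`, at the cost of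
finitely many derivatives and weights. -/
lemma Gh_sub_q [CompleteSpace V] (σ : Fin 2 → V →L[ℝ] V) (J : V →L[ℝ] V) (m : Vec → ℝ) (k : ℕ) :
    ∃ (C : ℝ) (r : ℕ), 0 ≤ C ∧ ∀ (h : ℝ), 0 < h → h ≤ 1 → ∀ (u : 𝓢(Vec, V)),
    q k (opGh σ J m h u - opG σ J m u) ≤ C * h * q r u := by
  obtain ⟨C, r, hC, H⟩ := D_sub_q (V := V) k
  refine ⟨(‖σ 0‖ + ‖σ 1‖) * C, r, by positivity, fun h h0 h1 u => ?_⟩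
  have e : opGh σ J m h u - opG σ J m u =
      opS (σ 0) (opD 0 h u - opP 0 u) + opS (σ 1) (opD 1 h u - opP 1 u) := by
    simp only [opGh_eq, opG_eq, Fin.sum_univ_two, map_sub]; abel
  rw [e]
  refine (map_add_le_add _ _ _).trans ?_
  have e0 := (q_S k (σ 0) (opD 0 h u - opP 0 u)).trans
    (mul_le_mul_of_nonneg_left (H 0 h h0 h1 u) (norm_nonneg (σ 0)))
  have e1 := (q_S k (σ 1) (opD 1 h u - opP 1 u)).trans
    (mul_le_mul_of_nonneg_left (H 1 h h0 h1 u) (norm_nonneg (σ 1)))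
  linarith

/-- For fixed `h` the discretised generator is bounded in every `q k`, without loss. -/
lemma Gh_bdd (σ : Fin 2 → V →L[ℝ] V) (J : V →L[ℝ] V) {m : Vec → ℝ} (hm : Mult m) {h : ℝ}
    (h0 : 0 < h) (h1 : h ≤ 1) (k : ℕ) :
    ∃ C : ℝ, 0 ≤ C ∧ ∀ (u : 𝓢(Vec, V)), q k (opGh σ J m h u) ≤ C * q k u := by
  obtain ⟨C, hC, H⟩ := q_D (V := V) k
  obtain ⟨C', hC', H'⟩ := q_M (V := V) k hm
  refine ⟨(‖σ 0‖ + ‖σ 1‖) * (C / h) + C' * ‖J‖, by positivity, fun u => ?_⟩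
  rw [opGh_eq, Fin.sum_univ_two]
  refine (map_add_le_add _ _ _).trans ?_
  have e := map_add_le_add (q k) (opS (σ 0) (opD 0 h u)) (opS (σ 1) (opD 1 h u))
  have e0 := (q_S k (σ 0) (opD 0 h u)).trans
    (mul_le_mul_of_nonneg_left (H 0 h h0 h1 u) (norm_nonneg (σ 0)))
  have e1 := (q_S k (σ 1) (opD 1 h u)).trans
    (mul_le_mul_of_nonneg_left (H 1 h h0 h1 u) (norm_nonneg (σ 1)))
  have e2 := (H' (opS J u)).trans (mul_le_mul_of_nonneg_left (q_S k J u) hC')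
  linarith

/-! ### Uniform energy estimates -/

/-- `u' t` is the derivative of the Schwartz-valued curve `u` at every time `t`, tested against all
continuous linear maps into Banach spaces. -/
def WD (u u' : ℝ → 𝓢(Vec, V)) : Prop :=
  ∀ (F : Type) [NormedAddCommGroup F] [NormedSpace ℝ F] [CompleteSpace F]
    (L : 𝓢(Vec, V) →L[ℝ] F) (t : ℝ),
    HasDerivAt (fun s => L (u s)) (L (u' t)) t

lemma WD.map {W : Type} [NormedAddCommGroup W] [InnerProductSpace ℝ W] {u u' : ℝ → 𝓢(Vec, V)}
    (h : WD u u') (A : 𝓢(Vec, V) →L[ℝ] 𝓢(Vec, W)) :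
    WD (fun t => A (u t)) (fun t => A (u' t)) :=
  fun F _ _ _ L t => h F (L ∘L A) t

lemma WD.sub {u u' v v' : ℝ → 𝓢(Vec, V)} (hu : WD u u') (hv : WD v v') :
    WD (fun t => u t - v t) (fun t => u' t - v' t) := fun F _ _ _ L t => by
  simpa using (hu F L t).fun_sub (hv F L t)

lemma scalar_gronwall_fwd {g g' : ℝ → ℝ} {T : ℝ} (hg : ∀ t, HasDerivAt g (g' t) t)
    (hb : ∀ t ∈ Icc 0 T, |g' t| ≤ |g t|) : ∀ t ∈ Icc 0 T, |g t| ≤ |g 0| * Real.exp t := by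
  intro t ht
  have := norm_le_gronwallBound_of_norm_deriv_right_le (f := g) (f' := g') (δ := |g 0|) (K := 1)
    (ε := 0) (a := 0) (b := T) (fun x _ => (hg x).continuousAt.continuousWithinAt)
    (fun x _ => (hg x).hasDerivWithinAt) le_rfl
    (fun x hx => by simpa using hb x (Ico_subset_Icc_self hx)) t ht
  simpa [gronwallBound_ε0] using this

lemma scalar_gronwall {g g' : ℝ → ℝ} {T : ℝ} (hg : ∀ t, HasDerivAt g (g' t) t)
    (hb : ∀ t, |t| ≤ T → |g' t| ≤ |g t|) : ∀ t, |t| ≤ T → |g t| ≤ |g 0| * Real.exp T := by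
  intro t ht
  have hT : 0 ≤ T := (abs_nonneg t).trans ht
  rcases le_total 0 t with h | h
  · have := scalar_gronwall_fwd (T := T) hg
      (fun t ht => hb t (by rw [abs_of_nonneg ht.1]; exact ht.2)) t ⟨h, (le_abs_self t).trans ht⟩
    refine this.trans ?_
    gcongr
    exact (le_abs_self t).trans ht
  · have hg' : ∀ t, HasDerivAt (fun s => g (-s)) (-g' (-t)) t := fun t => by
      have := (hg (-t)).scomp t (hasDerivAt_neg t)
      rwa [neg_one_smul] at this
    have := scalar_gronwall_fwd (T := T) hg'
      (fun t ht => by rw [abs_neg]; exact hb (-t) (by rw [abs_neg, abs_of_nonneg ht.1]; exact ht.2))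
      (-t) ⟨by linarith, (neg_le_abs t).trans ht⟩
    simp only [neg_neg, neg_zero] at this
    refine this.trans ?_
    gcongr
    exact (neg_le_abs t).trans ht

section
variable {σ : Fin 2 → V →L[ℝ] V} {J : V →L[ℝ] V} {m : Vec → ℝ}

/-- Forward and backward translates contribute equally, because `σⱼ` is symmetric; hence the central
difference `σⱼ Dⱼ` is skew. -/
lemma inner_S_T (hσ : ∀ j v w, inner ℝ (σ j v) w = inner ℝ v (σ j w)) (j : Fin 2) (a : Vec)
    (u : 𝓢(Vec, V)) : inner ℝ (toL2 u) (toL2 (opS (σ j) (opT (-a) u)))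
      = inner ℝ (toL2 u) (toL2 (opS (σ j) (opT a u))) := by
  rw [inner_toL2, inner_toL2]
  rw [← integral_sub_right_eq_self _ a]
  congr 1
  ext x
  rw [opS_apply, opS_apply, opT_apply, opT_apply, sub_neg_eq_add, sub_add_cancel, ← hσ,
    real_inner_comm]

/-- Skew-symmetry of the discretised generator, from symmetry of `σⱼ` and skewness of `J`. -/
lemma inner_Gh (hσ : ∀ j v w, inner ℝ (σ j v) w = inner ℝ v (σ j w))
    (hJ : ∀ v, inner ℝ v (J v) = 0) (hm : Mult m) (h : ℝ) (u : 𝓢(Vec, V)) :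
    inner ℝ (toL2 u) (toL2 (opGh σ J m h u)) = 0 := by
  rw [opGh_eq, map_add, inner_add_right, map_sum, inner_sum]
  have h1 : ∀ j, inner ℝ (toL2 u) (toL2 (opS (σ j) (opD j h u))) = 0 := by
    intro j
    rw [opD_eq, map_smul, map_sub, map_smul, map_sub, inner_smul_right, inner_sub_right,
      inner_S_T hσ, sub_self, mul_zero]
  have h2 : inner ℝ (toL2 u) (toL2 (opM m (opS J u))) = 0 := by
    rw [inner_toL2]
    simp [opM_apply hm, opS_apply, inner_smul_right, hJ]
  simp [h1, h2]

/-- The commutators of `x_j` and `∂_j` with the discretised generator have order zero, with bounds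
uniform in `h`. -/
lemma comm_bound (hm : Mult m) (k : ℕ) : ∃ C : ℝ, 0 ≤ C ∧ ∀ h, 0 < h → h ≤ 1 → ∀ z,
    ∃ K : 𝓢(Vec, V) →L[ℝ] 𝓢(Vec, V),
      (∀ u, opZ z (opGh σ J m h u) = opGh σ J m h (opZ z u) + K u) ∧
      ∀ u, q k (K u) ≤ C * q k u := by
  obtain ⟨CA, hCA, hA⟩ := q_A (V := V) k
  choose CM hCM hM using fun i => q_M (V := V) k (hm.pd i)
  refine ⟨(‖σ 0‖ + ‖σ 1‖) * CA + (CM 0 + CM 1) * ‖J‖, by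
    have := hCM 0; have := hCM 1; positivity, fun h h0 h1 z => ?_⟩
  cases z with
  | inl i =>
    refine ⟨-(opS (σ i) ∘L opA i h), fun u => ?_, fun u => ?_⟩
    · change opX i _ = opGh σ J m h (opX i u) + _
      simp only [opGh_eq, map_add, Fin.sum_univ_two, X_S, X_M i hm, X_D i _ h0.ne', map_sub,
        map_smul, neg_apply, ContinuousLinearMap.comp_apply]
      fin_cases i <;> simp <;> abel
    · rw [neg_apply, map_neg_eq_map]
      refine (q_S k (σ i) _).trans ?_
      have e := mul_le_mul_of_nonneg_left (hA i h h0 h1 u) (norm_nonneg (σ i))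
      refine e.trans ?_
      rw [← mul_assoc]
      gcongr
      have hc0 := hCM 0
      have hc1 := hCM 1
      have : 0 ≤ (CM 0 + CM 1) * ‖J‖ := by positivity
      have : ‖σ i‖ * CA ≤ (‖σ 0‖ + ‖σ 1‖) * CA := by
        gcongr
        fin_cases i <;> simp
      linarith
  | inr i =>
    refine ⟨opM (fun x => fderiv ℝ m x (eb i)) ∘L opS J, fun u => ?_, fun u => ?_⟩
    · change opP i _ = opGh σ J m h (opP i u) + _
      simp only [opGh_eq, map_add, Fin.sum_univ_two, P_S, P_M i hm, P_D,
        ContinuousLinearMap.comp_apply]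
      abel
    · refine (hM i (opS J u)).trans ?_
      have e := mul_le_mul_of_nonneg_left (q_S k J u) (hCM i)
      refine e.trans ?_
      rw [← mul_assoc]
      gcongr
      have hc0 := hCM 0
      have hc1 := hCM 1
      have : 0 ≤ (‖σ 0‖ + ‖σ 1‖) * CA := by positivity
      have : CM i * ‖J‖ ≤ (CM 0 + CM 1) * ‖J‖ := by
        gcongr
        fin_cases i <;> simp [hc0, hc1]
      linarith

/-- Energy estimates in every `q k`, uniform in the step `h`. -/
lemma energy [CompleteSpace V] (hσ : ∀ j v w, inner ℝ (σ j v) w = inner ℝ v (σ j w))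
    (hJ : ∀ v, inner ℝ v (J v) = 0) (hm : Mult m) (T : ℝ) (k : ℕ) :
    ∃ C : ℝ, 0 ≤ C ∧ ∀ h, 0 < h → h ≤ 1 → ∀ (u f : ℝ → 𝓢(Vec, V)) (a b : ℝ), 0 ≤ a → 0 ≤ b →
      WD u (fun t => opGh σ J m h (u t) + f t) → q k (u 0) ≤ a →
      (∀ t, |t| ≤ T → q k (f t) ≤ b) → ∀ t, |t| ≤ T → q k (u t) ≤ C * (a + b) := by
  induction k with
  | zero =>
    refine ⟨Real.exp T, by positivity, fun h h0 h1 u f a b ha hb hu hua hfb t ht => ?_⟩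
    have hT : 0 ≤ T := (abs_nonneg t).trans ht
    have hd : ∀ t, HasDerivAt (fun s => ‖toL2 (u s)‖ ^ 2 + b ^ 2)
        (2 * inner ℝ (toL2 (u t)) (toL2 (f t))) t := by
      intro t
      have := ((hu _ toL2 t).norm_sq).add_const (b ^ 2)
      rwa [map_add, inner_add_right, inner_Gh hσ hJ hm, zero_add] at this
    have key := scalar_gronwall (T := T) hd (fun t ht => by
      have e1 := abs_real_inner_le_norm (toL2 (u t)) (toL2 (f t))
      have e2 : ‖toL2 (f t)‖ ≤ b := hfb t ht
      have e3 : ‖toL2 (u t)‖ * ‖toL2 (f t)‖ ≤ ‖toL2 (u t)‖ * b := by gcongr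
      rw [abs_mul, abs_two, abs_of_nonneg (a := ‖toL2 (u t)‖ ^ 2 + b ^ 2) (by positivity)]
      nlinarith [sq_nonneg (‖toL2 (u t)‖ - b)]) t ht
    rw [abs_of_nonneg (by positivity), abs_of_nonneg (by positivity)] at key
    change ‖toL2 (u t)‖ ≤ _
    have h3 : ‖toL2 (u 0)‖ ≤ a := hua
    refine abs_le_of_sq_le_sq' ?_ (by positivity) |>.2
    have h4 : ‖toL2 (u 0)‖ ^ 2 ≤ a ^ 2 := by gcongr
    have h5 : 1 ≤ Real.exp T := Real.one_le_exp hT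
    calc ‖toL2 (u t)‖ ^ 2 ≤ (‖toL2 (u 0)‖ ^ 2 + b ^ 2) * Real.exp T := by nlinarith
      _ ≤ (a + b) ^ 2 * (Real.exp T * Real.exp T) := by
        gcongr
        · nlinarith
        · nlinarith
      _ = _ := by ring
  | succ k ih =>
    obtain ⟨C, hC, H⟩ := ih
    obtain ⟨CK, hCK, hK⟩ := comm_bound (σ := σ) (J := J) hm k
    refine ⟨5 * (C * (1 + CK * C)), by positivity,
      fun h h0 h1 u f a b ha hb hu hua hfb t ht => ?_⟩
    have hu0 : ∀ t, |t| ≤ T → q k (u t) ≤ C * (a + b) :=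
      H h h0 h1 u f a b ha hb hu ((q_le_succ k _).trans hua)
        fun t ht => (q_le_succ k _).trans (hfb t ht)
    have hp : 0 ≤ C * (CK * C) * (a + b) := by positivity
    rw [mul_assoc 5]
    refine q_succ_le' ?_ fun z => ?_
    · have := hu0 t ht
      linarith
    · obtain ⟨K, hKe, hKb⟩ := hK h h0 h1 z
      have hw : WD (fun t => opZ z (u t))
          (fun t => opGh σ J m h (opZ z (u t)) + (K (u t) + opZ z (f t))) := by
        have := hu.map (opZ z)
        simpa only [map_add, hKe, add_assoc] using this
      have := H h h0 h1 _ _ a (CK * (C * (a + b)) + b) ha (by positivity) hw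
        ((q_Z_le k z _).trans hua) (fun t ht => by
          refine (map_add_le_add _ _ _).trans (add_le_add ?_ ((q_Z_le k z _).trans (hfb t ht)))
          exact (hKb _).trans (mul_le_mul_of_nonneg_left (hu0 t ht) hCK)) t ht
      refine this.trans_eq ?_
      ring

end

/-! ### Existence of the evolution -/

section
open scoped Nat

lemma cont_le_q [CompleteSpace V] (p : Seminorm ℝ 𝓢(Vec, V)) (hp : Continuous p) :
    ∃ (k : ℕ) (C : ℝ), 0 ≤ C ∧ ∀ u, p u ≤ C * q k u := by
  obtain ⟨s, C, -, h⟩ := Seminorm.bound_of_continuous (q_withSeminorms (V := V)) p hp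
  refine ⟨s.sup id, C, C.2, fun u => (h u).trans ?_⟩
  change (C : ℝ) * (s.sup q) u ≤ _
  gcongr
  refine Seminorm.finset_sup_apply_le (apply_nonneg _ _) fun i hi => ?_
  exact q_mono (Finset.le_sup (f := id) hi) u

lemma op_le_q [CompleteSpace V] (A : 𝓢(Vec, V) →L[ℝ] 𝓢(Vec, V)) (k : ℕ) :
    ∃ (r : ℕ) (C : ℝ), 0 ≤ C ∧ ∀ u, q k (A u) ≤ C * q r u :=
  cont_le_q ((q k : Seminorm ℝ 𝓢(Vec, V)).comp A.toLinearMap)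
    (show Continuous fun u => q k (A u) from (q_continuous k).comp A.continuous)

lemma q_iterate {R : 𝓢(Vec, V) →L[ℝ] 𝓢(Vec, V)} {k : ℕ} {C : ℝ} (hC : 0 ≤ C)
    (hR : ∀ u, q k (R u) ≤ C * q k u) (n : ℕ) (u : 𝓢(Vec, V)) :
    q k (R^[n] u) ≤ C ^ n * q k u := by
  induction n with
  | zero => simp
  | succ n ih =>
    rw [Function.iterate_succ_apply', pow_succ', mul_assoc]
    exact (hR _).trans (mul_le_mul_of_nonneg_left ih hC)

/-- An operator bounded in every `q k` generates a flow on the Schwartz space, given by its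
exponential series. -/
lemma exists_flow [CompleteSpace V] (R : 𝓢(Vec, V) →L[ℝ] 𝓢(Vec, V))
    (hR : ∀ k, ∃ C : ℝ, 0 ≤ C ∧ ∀ u, q k (R u) ≤ C * q k u) (u₀ : 𝓢(Vec, V)) :
    ∃ u : ℝ → 𝓢(Vec, V), u 0 = u₀ ∧ WD u (fun t => R (u t)) := by
  have hs : ∀ t : ℝ, ∃ s, HasSum (fun n : ℕ => (t ^ n / n !) • R^[n] u₀) s := by
    intro t
    refine schwartz_hasSum _ fun k => ?_
    obtain ⟨C, hC, h⟩ := hR k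
    refine Summable.of_nonneg_of_le (fun _ => apply_nonneg _ _) (fun n => ?_)
      ((Real.summable_pow_div_factorial (|t| * C)).mul_right (q k u₀))
    rw [map_smul_eq_mul, norm_div, norm_pow, Real.norm_eq_abs, Real.norm_natCast, mul_pow]
    calc _ ≤ |t| ^ n / n ! * (C ^ n * q k u₀) := by
          gcongr; exact q_iterate hC h n u₀
      _ = _ := by ring
  choose u hu using hs
  refine ⟨u, ?_, ?_⟩
  · refine (hu 0).unique ?_
    have := hasSum_ite_eq (0 : ℕ) u₀
    convert! this using 2 with n
    by_cases hn : n = 0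
    · subst hn; simp
    · simp [hn]
  · intro F _ _ _ L t
    have h1 : ∀ s : ℝ, HasSum (fun n : ℕ => (s ^ n / n !) • L (R^[n] u₀)) (L (u s)) := fun s => by
      simpa using L.hasSum (hu s)
    have h2 : ∀ s : ℝ, HasSum (fun n : ℕ => (s ^ n / n !) • L (R^[n + 1] u₀)) (L (R (u s))) :=
      fun s => by
        have := (L ∘L R).hasSum (hu s)
        simpa [Function.iterate_succ_apply'] using this
    have h3 : ∀ s : ℝ, L (u s) = L u₀ + ∑' n : ℕ, (s ^ (n + 1) / (n + 1)!) • L (R^[n + 1] u₀) := by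
      intro s
      rw [← (h1 s).tsum_eq, (h1 s).summable.tsum_eq_zero_add]
      simp
    simp_rw [h3]
    refine HasDerivAt.const_add _ ?_
    rw [← (h2 t).tsum_eq]
    obtain ⟨k, K, hK, hL⟩ := clm_le_q L
    obtain ⟨C, hC, h⟩ := hR k
    set ρ := |t| + 1
    have hρ : 0 ≤ ρ := by positivity
    refine hasDerivAt_tsum_of_isPreconnected
      (u := fun n : ℕ => (ρ * C) ^ n / n ! * (K * C * q k u₀))
      (g := fun (n : ℕ) (s : ℝ) => (s ^ (n + 1) / ((n + 1)! : ℝ)) • L (R^[n + 1] u₀))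
      (g' := fun (n : ℕ) (s : ℝ) => (s ^ n / (n ! : ℝ)) • L (R^[n + 1] u₀))
      (t := Metric.ball (0 : ℝ) ρ) (y₀ := 0) ?_ Metric.isOpen_ball
      (convex_ball (0 : ℝ) ρ).isPreconnected ?_ ?_ ?_ ?_ ?_
    · exact (Real.summable_pow_div_factorial _).mul_right _
    · intro n y _
      have : HasDerivAt (fun y : ℝ => y ^ (n + 1) / ((n + 1)! : ℝ)) (y ^ n / n !) y := by
        have := (hasDerivAt_pow (n + 1) y).div_const ((n + 1)! : ℝ)
        convert! this using 1
        rw [Nat.factorial_succ]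
        push_cast
        have : (n ! : ℝ) ≠ 0 := by positivity
        field_simp
      exact this.smul_const _
    · intro n y hy
      have hy' : |y| ≤ ρ := by simpa using (mem_ball_zero_iff.1 hy).le
      rw [norm_smul, norm_div, norm_pow, Real.norm_eq_abs, Real.norm_natCast]
      calc _ ≤ ρ ^ n / n ! * (K * (C ^ (n + 1) * q k u₀)) := by
            gcongr
            exact (hL _).trans (mul_le_mul_of_nonneg_left (q_iterate hC h _ _) hK)
        _ = _ := by rw [mul_pow, pow_succ]; ring
    · simp [ρ]; positivity
    · simp [summable_zero]
    · simp [ρ]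

section
variable {σ : Fin 2 → V →L[ℝ] V} {J : V →L[ℝ] V} {m : Vec → ℝ}

/-- The distance to the limit of a sequence with geometrically decreasing increments. -/
lemma geom_tail {a : ℕ → 𝓢(Vec, V)} {s : 𝓢(Vec, V)} {k : ℕ} {B : ℝ}
    (h : ∀ n, q k (a (n + 1) - a n) ≤ B * (1 / 2) ^ n) (hs : Tendsto a atTop (𝓝 s)) (n : ℕ) :
    q k (a n - s) ≤ 2 * B * (1 / 2) ^ n := by
  have h1 : ∀ p, q k (a (n + p) - a n) ≤ 2 * B * (1 / 2) ^ n - 2 * B * (1 / 2) ^ (n + p) := by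
    intro p
    induction p with
    | zero => simp
    | succ p ih =>
      have e : a (n + (p + 1)) - a n = (a (n + p + 1) - a (n + p)) + (a (n + p) - a n) := by
        rw [← add_assoc]; abel
      rw [e]
      refine (map_add_le_add _ _ _).trans ?_
      have := h (n + p)
      rw [← add_assoc n p 1, pow_succ]
      linarith
  have hB : 0 ≤ B := by
    have := (apply_nonneg (q k) _).trans (h 0)
    simpa using this
  have h2 : Tendsto (fun p => q k (a (n + p) - a n)) atTop (𝓝 (q k (s - a n))) := by
    refine ((q_continuous k).tendsto _).comp (Tendsto.sub_const ?_ _)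
    have := hs.comp (tendsto_add_atTop_nat n)
    simp only [add_comm n]
    exact this
  rw [map_sub_rev]
  refine le_of_tendsto h2 (.of_forall fun p => (h1 p).trans ?_)
  have : 0 ≤ 2 * B * (1 / 2) ^ (n + p) := by positivity
  linarith

lemma hstep (n : ℕ) : (0 : ℝ) < (1 / 2) ^ n ∧ ((1 / 2) ^ n : ℝ) ≤ 1 :=
  ⟨by positivity, pow_le_one₀ (by norm_num) (by norm_num)⟩

/-- Existence for the first-order system: the flows of the discretised generators with step `2⁻ⁿ`
form a Cauchy sequence in every `q k`, uniformly on bounded time intervals, by `energy` and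
`Gh_sub_q`. -/
theorem exists_evolution [CompleteSpace V]
    (hσ : ∀ j v w, inner ℝ (σ j v) w = inner ℝ v (σ j w))
    (hJ : ∀ v, inner ℝ v (J v) = 0) (hm : Mult m) (u₀ : 𝓢(Vec, V)) :
    ∃ u : ℝ → 𝓢(Vec, V), u 0 = u₀ ∧ WD u (fun t => opG σ J m (u t)) := by
  choose a ha0 ha using fun n : ℕ => exists_flow (opGh σ J m ((1 / 2) ^ n))
    (fun k => Gh_bdd σ J hm (hstep n).1 (hstep n).2 k) u₀
  have bd : ∀ T k, ∃ M : ℝ, 0 ≤ M ∧ ∀ n t, |t| ≤ T → q k (a n t) ≤ M := by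
    intro T k
    obtain ⟨C, hC, H⟩ := energy hσ hJ hm T k
    refine ⟨C * (q k u₀ + 0), by positivity, fun n t ht => ?_⟩
    exact H _ (hstep n).1 (hstep n).2 (a n) (fun _ => 0) _ 0 (apply_nonneg _ _) le_rfl
      (by simpa using ha n) (by rw [ha0]) (fun t _ => by simp) t ht
  have cauchy : ∀ T k, ∃ B : ℝ, ∀ n t, |t| ≤ T →
      q k (a (n + 1) t - a n t) ≤ B * (1 / 2) ^ n := by
    intro T k
    obtain ⟨C, hC, H⟩ := energy hσ hJ hm T k
    obtain ⟨C', r, hC', H'⟩ := Gh_sub_q σ J m k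
    obtain ⟨M, hM, HM⟩ := bd T r
    refine ⟨C * (2 * C' * M), fun n t ht => ?_⟩
    have hw : WD (fun t => a (n + 1) t - a n t) (fun t =>
        opGh σ J m ((1 / 2) ^ (n + 1)) (a (n + 1) t - a n t) +
        (opGh σ J m ((1 / 2) ^ (n + 1)) (a n t) - opGh σ J m ((1 / 2) ^ n) (a n t))) := by
      have := (ha (n + 1)).sub (ha n)
      convert! this using 2 with t
      rw [map_sub]; abel
    have := H _ (hstep (n + 1)).1 (hstep (n + 1)).2 _ _ 0 (2 * C' * M * (1 / 2) ^ n) le_rfl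
      (by positivity) hw (by simp [ha0]) (fun t ht => ?_) t ht
    · refine this.trans_eq ?_
      ring
    · have e1 := H' _ (hstep (n + 1)).1 (hstep (n + 1)).2 (a n t)
      have e2 := H' _ (hstep n).1 (hstep n).2 (a n t)
      have e3 := map_sub_le_add (q k) (opGh σ J m ((1 / 2) ^ (n + 1)) (a n t) - opG σ J m (a n t))
        (opGh σ J m ((1 / 2) ^ n) (a n t) - opG σ J m (a n t))
      rw [sub_sub_sub_cancel_right] at e3
      have e4 : C' * (1 / 2) ^ n * q r (a n t) ≤ C' * (1 / 2) ^ n * M := by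
        gcongr; exact HM n t ht
      have e5 : C' * (1 / 2) ^ (n + 1) * q r (a n t) ≤ C' * (1 / 2) ^ n * M := by
        have hp : (1 / 2 : ℝ) ^ (n + 1) ≤ (1 / 2) ^ n :=
          pow_le_pow_of_le_one (by norm_num) (by norm_num) (Nat.le_succ n)
        exact mul_le_mul (mul_le_mul_of_nonneg_left hp hC') (HM n t ht) (apply_nonneg _ _)
          (by positivity)
      linarith
  have lim : ∀ t, ∃ s, Tendsto (fun n => a n t) atTop (𝓝 s) := by
    intro t
    obtain ⟨s, hs⟩ := schwartz_hasSum (fun n => a (n + 1) t - a n t) fun k => by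
      obtain ⟨B, hB⟩ := cauchy |t| k
      exact Summable.of_nonneg_of_le (fun _ => apply_nonneg _ _) (fun n => hB n t le_rfl)
        ((summable_geometric_two).mul_left B)
    refine ⟨s + a 0 t, ?_⟩
    have := hs.tendsto_sum_nat.add_const (a 0 t)
    simpa only [Finset.sum_range_sub (fun n => a n t), sub_add_cancel] using this
  choose u hu using lim
  refine ⟨u, ?_, ?_⟩
  · refine tendsto_nhds_unique (hu 0) ?_
    simp [ha0]
  intro F _ _ _ L t
  set T := |t| + 1
  have hball : ∀ s ∈ Metric.ball (0 : ℝ) T, |s| ≤ T := fun s hs => by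
    simpa using (mem_ball_zero_iff.1 hs).le
  refine hasDerivAt_of_tendstoUniformlyOn (l := atTop) (f := fun n s => L (a n s))
    (f' := fun n s => L (opGh σ J m ((1 / 2) ^ n) (a n s))) (g' := fun s => L (opG σ J m (u s)))
    (s := Metric.ball (0 : ℝ) T) Metric.isOpen_ball ?_ (.of_forall fun n s _ => ha n F L s)
    (fun s _ => (L.continuous.tendsto _).comp (hu s)) (by simp [T])
  obtain ⟨k, K, hK, hL⟩ := clm_le_q L
  obtain ⟨C', r, hC', H'⟩ := Gh_sub_q σ J m k
  obtain ⟨M, hM, HM⟩ := bd T r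
  obtain ⟨r', C, hC, HG⟩ := op_le_q (opG σ J m) k
  obtain ⟨B, hB⟩ := cauchy T r'
  rw [Metric.tendstoUniformlyOn_iff]
  intro ε hε
  have hlim : Tendsto (fun n : ℕ => (K * (C' * M + C * (2 * B))) * (1 / 2 : ℝ) ^ n) atTop (𝓝 0) := by
    simpa using (tendsto_pow_atTop_nhds_zero_of_lt_one (r := (1 / 2 : ℝ)) (by norm_num)
      (by norm_num)).const_mul (K * (C' * M + C * (2 * B)))
  filter_upwards [(tendsto_order.1 hlim).2 ε hε] with n hn s hs
  refine lt_of_le_of_lt ?_ hn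
  rw [dist_comm, dist_eq_norm, ← map_sub]
  refine (hL _).trans ?_
  rw [mul_assoc]
  gcongr
  have e1 := H' _ (hstep n).1 (hstep n).2 (a n s)
  have e2 := HG (a n s - u s)
  have e3 := geom_tail (fun n => hB n s (hball s hs)) (hu s) n
  have e4 := map_add_le_add (q k) (opGh σ J m ((1 / 2) ^ n) (a n s) - opG σ J m (a n s))
    (opG σ J m (a n s - u s))
  rw [map_sub (opG σ J m), sub_add_sub_cancel, ← map_sub (opG σ J m)] at e4
  have e5 : C' * (1 / 2) ^ n * q r (a n s) ≤ C' * (1 / 2) ^ n * M := by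
    gcongr; exact HM n s (hball s hs)
  have e6 := mul_le_mul_of_nonneg_left e3 hC
  linarith

end

/-- Evaluation at `x` on Schwartz functions. -/
def evalS {W : Type} [NormedAddCommGroup W] [NormedSpace ℝ W] (x : Vec) : 𝓢(Vec, W) →L[ℝ] W :=
  BoundedContinuousFunction.evalCLM ℝ x ∘L toBoundedContinuousFunctionCLM ℝ Vec W

/-- Joint smoothness in space and time of a Schwartz-valued solution curve of a linear equation, by
induction on the order: the partial derivatives are again of the form `L (u t) x`. -/
lemma contDiff_of_WD [CompleteSpace V] {u : ℝ → 𝓢(Vec, V)} {G : 𝓢(Vec, V) →L[ℝ] 𝓢(Vec, V)}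
    (hu : WD u (fun t => G (u t))) (n : ℕ) (W : Type) [NormedAddCommGroup W] [NormedSpace ℝ W]
    [CompleteSpace W] (L : 𝓢(Vec, V) →L[ℝ] 𝓢(Vec, W)) :
    ContDiff ℝ n (fun p : Vec × ℝ => L (u p.2) p.1) := by
  have hcont : ∀ (W : Type) [NormedAddCommGroup W] [NormedSpace ℝ W]
      [CompleteSpace W] (L : 𝓢(Vec, V) →L[ℝ] 𝓢(Vec, W)),
      Continuous (fun p : Vec × ℝ => L (u p.2) p.1) := by
    intro W _ _ _ L
    have h1 : Continuous fun t => toBoundedContinuousFunctionCLM ℝ Vec W (L (u t)) :=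
      continuous_iff_continuousAt.2 fun t =>
        (hu _ (toBoundedContinuousFunctionCLM ℝ Vec W ∘L L) t).continuousAt
    exact (h1.comp continuous_snd).eval continuous_fst
  induction n generalizing W with
  | zero => exact contDiff_zero.2 (hcont W L)
  | succ n ih =>
    let A : Vec → ℝ → Vec →L[ℝ] W := fun x t => (fderivCLM ℝ Vec W ∘L L) (u t) x
    let B : Vec → ℝ → ℝ →L[ℝ] W := fun x t =>
      ContinuousLinearMap.toSpanSingleton ℝ ((L ∘L G) (u t) x)
    have hB : ∀ {n : ℕ}, ContDiff ℝ n (fun p : Vec × ℝ => (L ∘L G) (u p.2) p.1) →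
        ContDiff ℝ n (fun p : Vec × ℝ => B p.1 p.2) := fun h =>
      (ContinuousLinearMap.toSpanSingletonCLE (𝕜 := ℝ) (E := W)).contDiff.comp h
    rw [Nat.cast_succ, contDiff_succ_iff_hasFDerivAt]
    refine ⟨fun p => (A p.1 p.2).coprod (B p.1 p.2), ?_, fun p => ?_⟩
    · have hA := ih _ (fderivCLM ℝ Vec W ∘L L)
      have hB' := hB (ih _ (L ∘L G))
      have e : (fun p : Vec × ℝ => (A p.1 p.2).coprod (B p.1 p.2)) = fun p =>
          A p.1 p.2 ∘L ContinuousLinearMap.fst ℝ Vec ℝ +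
            B p.1 p.2 ∘L ContinuousLinearMap.snd ℝ Vec ℝ := by
        funext p; ext <;> simp
      rw [e]
      exact (hA.clm_comp contDiff_const).add (hB'.clm_comp contDiff_const)
    · have := hasStrictFDerivAt_uncurry_coprod (𝕜 := ℝ) (u := p) (f := fun x t => L (u t) x)
        (f₁ := A) (f₂ := B)
        (.of_forall fun v => (L (u v.2)).differentiableAt.hasFDerivAt)
        (.of_forall fun v => ?_) (hcont _ (fderivCLM ℝ Vec W ∘L L)).continuousAt ?_
      · exact this.hasFDerivAt
      · exact (hu _ (evalS v.1 ∘L L) v.2).hasFDerivAt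
      · exact (contDiff_zero.1 (hB (n := 0) (contDiff_zero.2 (hcont _ (L ∘L G))))).continuousAt

end

/-! ### Uniqueness by local energy estimates -/

lemma glue_deriv_nonneg (s : ℝ) : 0 ≤ deriv expNegInvGlue s :=
  expNegInvGlue.monotone.deriv_nonneg

lemma glue_deriv_zero {s : ℝ} (hs : s ≤ 0) : deriv expNegInvGlue s = 0 := by
  refine IsLocalMin.deriv_eq_zero (.of_forall fun x => ?_)
  rw [expNegInvGlue.zero_of_nonpos hs]
  exact expNegInvGlue.nonneg x

lemma glue_hasDerivAt (s : ℝ) : HasDerivAt expNegInvGlue (deriv expNegInvGlue s) s :=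
  ((expNegInvGlue.contDiff (n := 1)).differentiable (by norm_num) s).hasDerivAt

lemma glue_deriv_continuous : Continuous (deriv expNegInvGlue) :=
  (expNegInvGlue.contDiff (n := 1)).continuous_deriv le_rfl

/-- The function whose positivity set is the truncated backward cone-like region
`|X|² < r² - l T`. -/
def cone (r l : ℝ) (p : Vec × ℝ) : ℝ := r ^ 2 - l * p.2 - (p.1 0 ^ 2 + p.1 1 ^ 2)

/-- The directional derivative of `cone` at `p` along `v`. -/
def cone' (l : ℝ) (p v : Vec × ℝ) : ℝ := -l * v.2 - (2 * p.1 0 * v.1 0 + 2 * p.1 1 * v.1 1)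

lemma cone_continuous (r l : ℝ) : Continuous (cone r l) := by
  unfold cone; fun_prop

lemma cone_line (r l : ℝ) (p v : Vec × ℝ) : HasLineDerivAt ℝ (cone r l) (cone' l p v) p v := by
  have h : HasDerivAt (fun t : ℝ => r ^ 2 - l * (p.2 + t * v.2) -
      ((p.1 0 + t * v.1 0) ^ 2 + (p.1 1 + t * v.1 1) ^ 2)) (cone' l p v) 0 := by
    have e : ∀ a b : ℝ, HasDerivAt (fun t : ℝ => a + t * b) b 0 := fun a b => by
      simpa using ((hasDerivAt_id (0 : ℝ)).mul_const b).const_add a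
    have := ((((e p.2 v.2).const_mul l).const_sub (r ^ 2)).fun_sub
      (((e (p.1 0) (v.1 0)).fun_pow 2).fun_add ((e (p.1 1) (v.1 1)).fun_pow 2)))
    convert! this using 1
    simp [cone']
  simpa [HasLineDerivAt, cone] using h

lemma cone_pos_bound {r l : ℝ} (hr : 0 ≤ r) (hl : 0 ≤ l) {X : Vec} {T : ℝ} (hT : 0 ≤ T)
    (h : 0 < cone r l (X, T)) (j : Fin 2) : |X j| ≤ r := by
  have : X 0 ^ 2 + X 1 ^ 2 ≤ r ^ 2 := by
    have : 0 ≤ l * T := by positivity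
    unfold cone at h
    linarith
  refine abs_le_of_sq_le_sq ?_ hr
  fin_cases j
  · exact (le_add_of_nonneg_right (sq_nonneg _)).trans this
  · exact (le_add_of_nonneg_left (sq_nonneg _)).trans this

lemma cone_nonpos {r l : ℝ} (hr : 0 ≤ r) (hl : 0 ≤ l) {X : Vec} {T : ℝ} (hT : 0 ≤ T)
    (h : X ∉ Metric.closedBall (0 : Vec) r) : cone r l (X, T) ≤ 0 := by
  by_contra! hc
  refine h (mem_closedBall_zero_iff.2 ((pi_norm_le_iff_of_nonneg hr).2 fun j => ?_))
  exact cone_pos_bound hr hl hT hc j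

section
variable (r l : ℝ) (w : Vec × ℝ → V) (A : V →L[ℝ] V)

/-- The localised quadratic form `ψ(cone) ⟪w, A w⟫`. -/
def locE (p : Vec × ℝ) : ℝ := expNegInvGlue (cone r l p) * inner ℝ (w p) (A (w p))

/-- The directional derivative of `locE` at `p` along `v`, for symmetric `A`. -/
def locE' (p v : Vec × ℝ) : ℝ :=
  deriv expNegInvGlue (cone r l p) * cone' l p v * inner ℝ (w p) (A (w p)) +
    expNegInvGlue (cone r l p) * (2 * inner ℝ (w p) (A (fderiv ℝ w p v)))

variable {r l w A}

lemma locE_zero {p : Vec × ℝ} (h : cone r l p ≤ 0) : locE r l w A p = 0 := by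
  simp [locE, expNegInvGlue.zero_of_nonpos h]

lemma locE'_zero {p v : Vec × ℝ} (h : cone r l p ≤ 0) : locE' r l w A p v = 0 := by
  simp [locE', expNegInvGlue.zero_of_nonpos h, glue_deriv_zero h]

lemma locE_line (hA : ∀ v w, inner ℝ (A v) w = inner ℝ v (A w)) {p : Vec × ℝ}
    (hw : DifferentiableAt ℝ w p) (v : Vec × ℝ) :
    HasLineDerivAt ℝ (locE r l w A) (locE' r l w A p v) p v := by
  have h1 : HasDerivAt (fun t : ℝ => w (p + t • v)) (fderiv ℝ w p v) 0 :=
    hw.hasFDerivAt.hasLineDerivAt v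
  have h2 : HasDerivAt (fun t : ℝ => cone r l (p + t • v)) (cone' l p v) 0 := cone_line r l p v
  have h3 := (glue_hasDerivAt (cone r l (p + (0 : ℝ) • v))).comp (0 : ℝ) h2
  have h4 := h3.mul (h1.inner ℝ (A.hasFDerivAt.comp_hasDerivAt (0 : ℝ) h1))
  have : HasDerivAt (fun t : ℝ => locE r l w A (p + t • v)) (locE' r l w A p v) 0 := by
    convert! h4 using 1
    simp only [zero_smul, add_zero, Function.comp_apply, locE']
    have e : inner ℝ (fderiv ℝ w p v) (A (w p)) = inner ℝ (w p) (A (fderiv ℝ w p v)) := by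
      rw [← hA, real_inner_comm]
    rw [e]
    ring
  exact this

lemma locE_continuousOn {s : Set (Vec × ℝ)} (hw : ContinuousOn w s) :
    ContinuousOn (locE r l w A) s :=
  ((expNegInvGlue.contDiff (n := 0)).continuous.comp (cone_continuous r l)).continuousOn.mul
    (hw.inner (𝕜 := ℝ) (A.continuous.comp_continuousOn hw))

lemma locE'_continuousOn {s : Set (Vec × ℝ)} (hs : IsOpen s) (hw : ContDiffOn ℝ 1 w s)
    (v : Vec × ℝ) : ContinuousOn (fun p => locE' r l w A p v) s := by
  have hc : Continuous fun p => cone' l p v := by unfold cone'; fun_prop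
  have hd : ContinuousOn (fun p => fderiv ℝ w p v) s :=
    (hw.continuousOn_fderiv_of_isOpen hs le_rfl).clm_apply continuousOn_const
  refine ContinuousOn.add ?_ ?_
  · refine ContinuousOn.mul ?_ (hw.continuousOn.inner (𝕜 := ℝ)
      (A.continuous.comp_continuousOn hw.continuousOn))
    exact ((glue_deriv_continuous.comp (cone_continuous r l)).mul hc).continuousOn
  · refine ContinuousOn.mul ?_ ?_
    · exact ((expNegInvGlue.contDiff (n := 0)).continuous.comp (cone_continuous r l)).continuousOn
    · exact continuousOn_const.mul (hw.continuousOn.inner (𝕜 := ℝ)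
        (A.continuous.comp_continuousOn hd))

/-- Integrating a spatial derivative of the localised quadratic form gives zero. -/
lemma integral_locE'_space (hr : 0 ≤ r) (hl : 0 ≤ l)
    (hA : ∀ v w, inner ℝ (A v) w = inner ℝ v (A w))
    (hw : ContDiffOn ℝ 1 w (univ ×ˢ Ioi 0)) {T : ℝ} (hT : 0 < T) (e : Vec) :
    Integrable (fun X => locE' r l w A (X, T) (e, 0)) ∧
      ∫ X, locE' r l w A (X, T) (e, 0) = 0 := by
  have ho : IsOpen (univ ×ˢ Ioi 0 : Set (Vec × ℝ)) := isOpen_univ.prod isOpen_Ioi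
  have hcs : ∀ f : Vec → ℝ, (∀ X, cone r l (X, T) ≤ 0 → f X = 0) → HasCompactSupport f :=
    fun f hf => HasCompactSupport.intro (isCompact_closedBall (0 : Vec) r)
      fun X hX => hf X (cone_nonpos hr hl hT.le hX)
  have hmap : Continuous fun X : Vec => (X, T) := by fun_prop
  have hin : ∀ X : Vec, (X, T) ∈ (univ ×ˢ Ioi 0 : Set (Vec × ℝ)) := fun X => by simpa using hT
  have c1 : Continuous fun X => locE r l w A (X, T) :=
    (locE_continuousOn hw.continuousOn).comp_continuous hmap hin
  have c2 : Continuous fun X => locE' r l w A (X, T) (e, 0) :=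
    (locE'_continuousOn ho hw _).comp_continuous hmap hin
  have i1 := c1.integrable_of_hasCompactSupport (μ := volume) (hcs _ fun X h => locE_zero h)
  have i2 := c2.integrable_of_hasCompactSupport (μ := volume) (hcs _ fun X h => locE'_zero h)
  refine ⟨i2, ?_⟩
  have := integral_bilinear_hasLineDerivAt_right_eq_neg_left_of_integrable (μ := volume)
    (f := fun _ : Vec => (1 : ℝ)) (f' := fun _ => 0) (g := fun X => locE r l w A (X, T))
    (g' := fun X => locE' r l w A (X, T) (e, 0)) (v := e) (B := ContinuousLinearMap.mul ℝ ℝ)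
    (by simp) (by simpa using i2) (by simpa using i1)
    (fun X _ => by simpa [HasLineDerivAt] using hasDerivAt_const (0 : ℝ) (1 : ℝ)) fun X _ => ?_
  · simpa using this
  · have := locE_line (r := r) (l := l) hA
      ((hw.contDiffAt (ho.mem_nhds (hin X))).differentiableAt (by norm_num)) (e, 0)
    simpa [HasLineDerivAt] using this

/-- Differentiation of the local energy in time. -/
lemma hasDerivAt_locE (hr : 0 ≤ r) (hl : 0 ≤ l)
    (hA : ∀ v w, inner ℝ (A v) w = inner ℝ v (A w))
    (hw : ContDiffOn ℝ 1 w (univ ×ˢ Ioi 0)) {T : ℝ} (hT : 0 < T) :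
    Integrable (fun X => locE' r l w A (X, T) (0, 1)) ∧
    HasDerivAt (fun t => ∫ X, locE r l w A (X, t)) (∫ X, locE' r l w A (X, T) (0, 1)) T := by
  have ho : IsOpen (univ ×ˢ Ioi 0 : Set (Vec × ℝ)) := isOpen_univ.prod isOpen_Ioi
  have hmap : ∀ t : ℝ, Continuous fun X : Vec => (X, t) := fun t => by fun_prop
  have hin : ∀ t : ℝ, 0 < t → ∀ X : Vec, (X, t) ∈ (univ ×ˢ Ioi 0 : Set (Vec × ℝ)) :=
    fun t ht X => by simpa using ht
  have c1 : ∀ t : ℝ, 0 < t → Continuous fun X => locE r l w A (X, t) := fun t ht =>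
    (locE_continuousOn hw.continuousOn).comp_continuous (hmap t) (hin t ht)
  have c2 : Continuous fun X => locE' r l w A (X, T) (0, 1) :=
    (locE'_continuousOn ho hw _).comp_continuous (hmap T) (hin T hT)
  have hIcc : ∀ t ∈ Icc (T / 2) (2 * T), 0 < t := fun t ht => lt_of_lt_of_le (by linarith) ht.1
  have hK : IsCompact (Metric.closedBall (0 : Vec) r ×ˢ Icc (T / 2) (2 * T)) :=
    (isCompact_closedBall _ _).prod isCompact_Icc
  obtain ⟨C, hC⟩ := hK.exists_bound_of_continuousOn (f := fun p => locE' r l w A p (0, 1))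
    ((locE'_continuousOn ho hw (0, 1)).mono fun p hp => by simpa using hIcc _ hp.2)
  refine hasDerivAt_integral_of_dominated_loc_of_deriv_le (s := Icc (T / 2) (2 * T))
    (bound := (Metric.closedBall (0 : Vec) r).indicator fun _ => C)
    (F := fun t X => locE r l w A (X, t)) (F' := fun t X => locE' r l w A (X, t) (0, 1))
    (Icc_mem_nhds (by linarith) (by linarith)) ?_ ?_ c2.aestronglyMeasurable
    (.of_forall fun X t ht => ?_) ?_ (.of_forall fun X t ht => ?_)
  · filter_upwards [lt_mem_nhds hT] with t ht using (c1 t ht).aestronglyMeasurable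
  · exact (c1 T hT).integrable_of_hasCompactSupport
      (HasCompactSupport.intro (isCompact_closedBall (0 : Vec) r)
        fun X hX => locE_zero (cone_nonpos hr hl hT.le hX))
  · by_cases hX : X ∈ Metric.closedBall (0 : Vec) r
    · rw [indicator_of_mem hX]
      exact hC (X, t) ⟨hX, ht⟩
    · rw [indicator_of_notMem hX, locE'_zero (cone_nonpos hr hl (hIcc t ht).le hX), norm_zero]
  · exact (integrable_indicator_iff Metric.isClosed_closedBall.measurableSet).2
      (integrableOn_const (isCompact_closedBall _ _).measure_lt_top.ne)
  · have h := locE_line (r := r) (l := l) hA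
      ((hw.contDiffAt (ho.mem_nhds (hin t (hIcc t ht) X))).differentiableAt (by norm_num)) (0, 1)
    have h' : HasDerivAt (fun s : ℝ => locE r l w A (X, t + s)) (locE' r l w A (X, t) (0, 1)) 0 := by
      simpa [HasLineDerivAt] using h
    have h'' := HasDerivAt.comp_sub_const (x := t) (a := t) (f := fun s : ℝ => locE r l w A (X, t + s))
      (by simpa using h')
    simpa using h''

end

/-- Uniqueness by a local energy estimate on a region shrinking in time: a solution of a symmetric
hyperbolic system with zero initial data vanishes, whatever its growth at infinity. -/
theorem dirac_unique {σ : Fin 2 → V →L[ℝ] V} {J : V →L[ℝ] V} {m : Vec → ℝ}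
    (hσ : ∀ j v w, inner ℝ (σ j v) w = inner ℝ v (σ j w))
    (hJ : ∀ v, inner ℝ v (J v) = 0) (w : Vec × ℝ → V)
    (hc : ContinuousOn w (univ ×ˢ Ici 0)) (hw : ContDiffOn ℝ 1 w (univ ×ˢ Ioi 0))
    (heq : ∀ X : Vec, ∀ T : ℝ, 0 < T → fderiv ℝ w (X, T) (0, 1) =
      σ 0 (fderiv ℝ w (X, T) (eb 0, 0)) + σ 1 (fderiv ℝ w (X, T) (eb 1, 0)) +
        m X • J (w (X, T)))
    (h0 : ∀ X, w (X, 0) = 0) (X₀ : Vec) {T₀ : ℝ} (hT₀ : 0 ≤ T₀) : w (X₀, T₀) = 0 := by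
  obtain ⟨K, hK0, hK⟩ : ∃ K : ℝ, 0 ≤ K ∧ ∀ j, ‖σ j‖ ≤ K :=
    ⟨‖σ 0‖ + ‖σ 1‖, by positivity, fun j => by
      fin_cases j
      · exact le_add_of_nonneg_right (norm_nonneg _)
      · exact le_add_of_nonneg_left (norm_nonneg _)⟩
  set N := X₀ 0 ^ 2 + X₀ 1 ^ 2 with hN
  have hN0 : 0 ≤ N := by positivity
  set r := 4 * K * T₀ + N + 1 with hr_def
  have hr : 1 ≤ r := by
    have : 0 ≤ 4 * K * T₀ := by positivity
    linarith
  have hr0 : 0 ≤ r := zero_le_one.trans hr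
  set l := 4 * K * r with hl_def
  have hl : 0 ≤ l := by positivity
  have hpos : 0 < cone r l (X₀, T₀) := by
    have : cone r l (X₀, T₀) = r * (N + 1) - N := by
      simp only [cone, ← hN, hl_def]
      rw [hr_def]; ring
    rw [this]; nlinarith
  let I : V →L[ℝ] V := ContinuousLinearMap.id ℝ V
  have hI : ∀ v w : V, inner ℝ (I v) w = inner ℝ v (I w) := fun _ _ => rfl
  have hInn : ∀ p, 0 ≤ locE r l w I p := fun p =>
    mul_nonneg (expNegInvGlue.nonneg _) real_inner_self_nonneg
  set E : ℝ → ℝ := fun t => ∫ X, locE r l w I (X, t) with hE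
  have hEc : ContinuousOn E (Ici 0) := by
    refine continuousOn_integral_of_compact_support (isCompact_closedBall (0 : Vec) r) ?_
      fun t X ht hX => locE_zero (cone_nonpos hr0 hl ht hX)
    exact (locE_continuousOn hc).comp (continuous_swap).continuousOn fun p hp => ⟨mem_univ _, hp.1⟩
  have hpt : ∀ X : Vec, ∀ T : ℝ, 0 < T → locE' r l w I (X, T) (0, 1) ≤
      locE' r l w (σ 0) (X, T) (eb 0, 0) + locE' r l w (σ 1) (X, T) (eb 1, 0) := by
    intro X T hT
    by_cases hcone : cone r l (X, T) ≤ 0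
    · simp [locE'_zero hcone]
    have hb := cone_pos_bound hr0 hl hT.le (not_le.1 hcone)
    set v := w (X, T)
    have hj : ∀ j, X j * inner ℝ v (σ j v) ≤ r * (K * ‖v‖ ^ 2) := fun j => by
      refine (le_abs_self _).trans ?_
      rw [abs_mul]
      refine mul_le_mul (hb j) ?_ (abs_nonneg _) hr0
      calc _ ≤ ‖v‖ * ‖σ j v‖ := abs_real_inner_le_norm _ _
        _ ≤ ‖v‖ * (K * ‖v‖) := by
          gcongr; exact (σ j).le_of_opNorm_le (hK j) v
        _ = _ := by ring
    have key : deriv expNegInvGlue (cone r l (X, T)) *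
        (-(l * ‖v‖ ^ 2) + 2 * (X 0 * inner ℝ v (σ 0 v)) + 2 * (X 1 * inner ℝ v (σ 1 v))) ≤ 0 := by
      refine mul_nonpos_of_nonneg_of_nonpos (glue_deriv_nonneg _) ?_
      have h0 := hj 0
      have h1 := hj 1
      rw [hl_def]
      linarith
    have e : locE' r l w I (X, T) (0, 1) - (locE' r l w (σ 0) (X, T) (eb 0, 0) +
        locE' r l w (σ 1) (X, T) (eb 1, 0)) = deriv expNegInvGlue (cone r l (X, T)) *
        (-(l * ‖v‖ ^ 2) + 2 * (X 0 * inner ℝ v (σ 0 v)) + 2 * (X 1 * inner ℝ v (σ 1 v))) := by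
      simp only [locE', heq X T hT, I, ContinuousLinearMap.id_apply, inner_add_right,
        inner_smul_right, hJ, cone', eb, real_inner_self_eq_norm_sq]
      simp
      ring
    linarith
  have hED : ∀ T : ℝ, 0 < T → HasDerivAt E (∫ X, locE' r l w I (X, T) (0, 1)) T := fun T hT =>
    (hasDerivAt_locE hr0 hl hI hw hT).2
  have hanti : AntitoneOn E (Ici 0) := by
    refine antitoneOn_of_deriv_nonpos (convex_Ici 0) hEc ?_ ?_
    · rw [interior_Ici]
      exact fun T hT => (hED T hT).differentiableAt.differentiableWithinAt
    · rw [interior_Ici]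
      intro T hT
      rw [(hED T hT).deriv]
      have s0 := integral_locE'_space hr0 hl (hσ 0) hw hT (eb 0)
      have s1 := integral_locE'_space hr0 hl (hσ 1) hw hT (eb 1)
      refine (integral_mono (hasDerivAt_locE hr0 hl hI hw hT).1 (s0.1.add s1.1)
        fun X => hpt X T hT).trans_eq ?_
      rw [integral_add' s0.1 s1.1, s0.2, s1.2, add_zero]
  have hE0 : E 0 = 0 := by simp [hE, locE, h0]
  have hET : E T₀ = 0 :=
    le_antisymm ((hanti self_mem_Ici hT₀ hT₀).trans_eq hE0) (integral_nonneg fun X => hInn _)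
  have c1 : Continuous fun X => locE r l w I (X, T₀) :=
    (locE_continuousOn hc).comp_continuous (by fun_prop) fun X => ⟨mem_univ _, hT₀⟩
  have i1 : Integrable fun X => locE r l w I (X, T₀) := c1.integrable_of_hasCompactSupport
      (HasCompactSupport.intro (isCompact_closedBall (0 : Vec) r)
        fun X hX => locE_zero (cone_nonpos hr0 hl hT₀ hX))
  have hz := (integral_eq_zero_iff_of_nonneg (fun X => hInn _) i1).1 hET
  have hz' := (c1.ae_eq_iff_eq volume continuous_zero).1 hz
  have := congrFun hz' X₀
  simp only [locE, Pi.zero_apply, mul_eq_zero, (expNegInvGlue.pos_of_pos hpos).ne',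
    false_or] at this
  exact inner_self_eq_zero.1 this

/-! ### The Dirac system as a symmetric hyperbolic system -/

/-- Two-component spinors, with the Euclidean (real) inner product. -/
abbrev Spinor : Type := PiLp 2 fun _ : Fin 2 => ℂ

/-- The `i`-th component of a spinor. -/
def comp (i : Fin 2) : Spinor →L[ℝ] ℂ := PiLp.proj 2 (fun _ : Fin 2 => ℂ) i

/-- The inclusion of `ℂ` as the `i`-th component. -/
def incl (i : Fin 2) : ℂ →L[ℝ] Spinor :=
  LinearMap.toContinuousLinearMap
    { toFun := fun z => WithLp.toLp 2 (Pi.single i z)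
      map_add' := fun x y => by rw [Pi.single_add]; rfl
      map_smul' := fun a x => by
        ext j; by_cases h : j = i
        · subst h; simp
        · simp [h] }

/-- The operator on spinors with matrix `(a, b; c, d)`. -/
def spinOp (a b c d : ℂ) : Spinor →L[ℝ] Spinor :=
  incl 0 ∘L (LinearMap.toContinuousLinearMap (LinearMap.mulLeft ℝ a) ∘L comp 0 +
      LinearMap.toContinuousLinearMap (LinearMap.mulLeft ℝ b) ∘L comp 1) +
    incl 1 ∘L (LinearMap.toContinuousLinearMap (LinearMap.mulLeft ℝ c) ∘L comp 0 +
      LinearMap.toContinuousLinearMap (LinearMap.mulLeft ℝ d) ∘L comp 1)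

lemma comp_apply' (i : Fin 2) (v : Spinor) : comp i v = v i := rfl

@[simp] lemma incl_apply (i j : Fin 2) (z : ℂ) : (incl i z) j = if j = i then z else 0 := by
  change (Pi.single i z : Fin 2 → ℂ) j = _
  rw [Pi.single_apply]

lemma spinOp_zero (a b c d : ℂ) (v : Spinor) : (spinOp a b c d v) 0 = a * v 0 + b * v 1 := by
  simp [spinOp, comp_apply']

lemma spinOp_one (a b c d : ℂ) (v : Spinor) : (spinOp a b c d v) 1 = c * v 0 + d * v 1 := by
  simp [spinOp, comp_apply']

/-- The coefficients of `∂₁` and `∂₂` in the Dirac system solved for `∂_T`. -/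
def diracσ (c : ℝ) : Fin 2 → Spinor →L[ℝ] Spinor :=
  ![spinOp 0 c c 0, spinOp 0 (c * Complex.I) (-(c * Complex.I)) 0]

/-- The coefficient of the mass in the Dirac system solved for `∂_T`. -/
def diracJ : Spinor →L[ℝ] Spinor := spinOp Complex.I 0 0 (-Complex.I)

lemma diracσ_symm (c : ℝ) (j : Fin 2) (v w : Spinor) :
    inner ℝ (diracσ c j v) w = inner ℝ v (diracσ c j w) := by
  fin_cases j
  · simp [diracσ, PiLp.inner_apply, Complex.inner, Fin.sum_univ_two, spinOp_zero, spinOp_one]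
    ring
  · simp [diracσ, PiLp.inner_apply, Complex.inner, Fin.sum_univ_two, spinOp_zero, spinOp_one]
    ring

lemma diracJ_skew (v : Spinor) : inner ℝ v (diracJ v) = 0 := by
  simp [diracJ, PiLp.inner_apply, Complex.inner, Fin.sum_univ_two, spinOp_zero, spinOp_one]
  ring

/-- The Dirac equations at a point are equivalent to their form solved for the time derivative;
`a` is the time derivative, `b₀` and `b₁` the space derivatives and `v` the value of the spinor. -/
lemma dirac_iff (c m : ℝ) (a b₀ b₁ v : Spinor) :
    (Complex.I * a 0 - (c : ℂ) * (Complex.I * b₀ 1 - b₁ 1) + (m : ℂ) * v 0 = 0 ∧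
      Complex.I * a 1 - (c : ℂ) * (Complex.I * b₀ 0 + b₁ 0) - (m : ℂ) * v 1 = 0) ↔
    a = diracσ c 0 b₀ + diracσ c 1 b₁ + m • diracJ v := by
  have hI := Complex.I_mul_I
  constructor
  · rintro ⟨h1, h2⟩
    ext j
    fin_cases j
    · simp [diracσ, diracJ, spinOp_zero]
      linear_combination (-Complex.I) * h1 + (a 0 - c * b₀ 1) * hI
    · simp [diracσ, diracJ, spinOp_one]
      linear_combination (-Complex.I) * h2 + (a 1 - c * b₀ 0) * hI
  · intro h
    have e0 := congrArg (fun v : Spinor => v 0) h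
    have e1 := congrArg (fun v : Spinor => v 1) h
    simp [diracσ, diracJ, spinOp_zero, spinOp_one] at e0 e1
    rw [e0, e1]
    constructor
    · linear_combination (c * b₁ 1 + m * v 0) * hI
    · linear_combination (-c * b₁ 0 - m * v 1) * hI

/-- The spinor field with components `α₁`, `α₂`. -/
def spinor (α₁ α₂ : Vec → ℝ → ℂ) (p : Vec × ℝ) : Spinor :=
  incl 0 (α₁ p.1 p.2) + incl 1 (α₂ p.1 p.2)

lemma spinor_zero (α₁ α₂ : Vec → ℝ → ℂ) (p : Vec × ℝ) : spinor α₁ α₂ p 0 = α₁ p.1 p.2 := by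
  simp [spinor]

lemma spinor_one (α₁ α₂ : Vec → ℝ → ℂ) (p : Vec × ℝ) : spinor α₁ α₂ p 1 = α₂ p.1 p.2 := by
  simp [spinor]

lemma spinor_contDiffOn {α₁ α₂ : Vec → ℝ → ℂ} {s : Set (Vec × ℝ)} {n : WithTop ℕ∞}
    (h₁ : ContDiffOn ℝ n (fun p : Vec × ℝ => α₁ p.1 p.2) s)
    (h₂ : ContDiffOn ℝ n (fun p : Vec × ℝ => α₂ p.1 p.2) s) :
    ContDiffOn ℝ n (spinor α₁ α₂) s :=
  ((incl 0).contDiff.comp_contDiffOn h₁).add ((incl 1).contDiff.comp_contDiffOn h₂)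

lemma comp_time {w : Vec × ℝ → Spinor} {X : Vec} {T : ℝ} (hw : DifferentiableAt ℝ w (X, T))
    (i : Fin 2) : deriv (fun t => w (X, t) i) T = (fderiv ℝ w (X, T) (0, 1)) i := by
  have h1 : HasDerivAt (fun t : ℝ => (X, t)) ((0 : Vec), (1 : ℝ)) T :=
    (hasDerivAt_const T X).prodMk (hasDerivAt_id T)
  exact ((comp i).hasFDerivAt.comp_hasDerivAt T (hw.hasFDerivAt.comp_hasDerivAt T h1)).deriv

lemma comp_space {w : Vec × ℝ → Spinor} {X : Vec} {T : ℝ} (hw : DifferentiableAt ℝ w (X, T))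
    (i j : Fin 2) : pd j (fun Y => w (Y, T) i) X = (fderiv ℝ w (X, T) (eb j, 0)) i := by
  have h1 : HasFDerivAt (fun Y : Vec => (Y, T)) (ContinuousLinearMap.inl ℝ Vec ℝ) X :=
    hasFDerivAt_prodMk_left X T
  have h2 := (comp i).hasFDerivAt.comp X (hw.hasFDerivAt.comp X h1)
  exact congrArg (fun L : Vec →L[ℝ] ℂ => L (eb j)) h2.fderiv

/-- The Dirac system at a point where the spinor field is differentiable, in evolution form. -/
lemma diracSystem_iff {w : Vec × ℝ → Spinor} {X : Vec} {T : ℝ}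
    (hw : DifferentiableAt ℝ w (X, T)) (c m : ℝ) :
    (Complex.I * deriv (fun t => w (X, t) 0) T - (c : ℂ) *
        (Complex.I * pd 0 (fun Y => w (Y, T) 1) X - pd 1 (fun Y => w (Y, T) 1) X) +
        (m : ℂ) * w (X, T) 0 = 0 ∧
      Complex.I * deriv (fun t => w (X, t) 1) T - (c : ℂ) *
        (Complex.I * pd 0 (fun Y => w (Y, T) 0) X + pd 1 (fun Y => w (Y, T) 0) X) -
        (m : ℂ) * w (X, T) 1 = 0) ↔
    fderiv ℝ w (X, T) (0, 1) = diracσ c 0 (fderiv ℝ w (X, T) (eb 0, 0)) +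
      diracσ c 1 (fderiv ℝ w (X, T) (eb 1, 0)) + m • diracJ (w (X, T)) := by
  rw [← dirac_iff]
  simp only [comp_time hw, comp_space hw]

lemma spinor_eq {ED vF ϑ : ℝ} {κ : Vec → ℝ} {α₁₀ α₂₀ : 𝓢(Vec, ℂ)} {α₁ α₂ : Vec → ℝ → ℂ}
    (h : IsSol ED vF ϑ κ α₁₀ α₂₀ α₁ α₂) {X : Vec} {T : ℝ} (hT : 0 < T) :
    DifferentiableAt ℝ (spinor α₁ α₂) (X, T) ∧
    fderiv ℝ (spinor α₁ α₂) (X, T) (0, 1) =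
      diracσ (vF / (2 * √ED)) 0 (fderiv ℝ (spinor α₁ α₂) (X, T) (eb 0, 0)) +
      diracσ (vF / (2 * √ED)) 1 (fderiv ℝ (spinor α₁ α₂) (X, T) (eb 1, 0)) +
      (ϑ * κ X / (2 * √ED)) • diracJ (spinor α₁ α₂ (X, T)) := by
  obtain ⟨h₁, h₂, -, hD, -⟩ := h
  have hn : (univ ×ˢ Ici 0 : Set (Vec × ℝ)) ∈ 𝓝 (X, T) :=
    prod_mem_nhds univ_mem (Ici_mem_nhds hT)
  have hd : DifferentiableAt ℝ (spinor α₁ α₂) (X, T) :=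
    ((spinor_contDiffOn h₁ h₂).contDiffAt hn).differentiableAt (by simp)
  refine ⟨hd, (diracSystem_iff hd _ _).1 ?_⟩
  simpa only [spinor_zero, spinor_one] using hD X T hT.le

/-- Well-posedness of the Dirac equation with a varying mass:
for Schwartz data there is exactly one pair of smooth solutions on ℝ² × [0,∞)
that stays Schwartz in X for every T ≥ 0. -/
theorem stmt6 (ED vF ϑ : ℝ) (hED : 0 < ED) (hvF : 0 < vF) (hϑ : ϑ ≠ 0)
    (κ : Vec → ℝ) (hκ_smooth : ContDiff ℝ (⊤ : ℕ∞) κ)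
    (hκ_bdd : ∀ k : ℕ, ∃ C : ℝ, ∀ x : Vec, ‖iteratedFDeriv ℝ k κ x‖ ≤ C)
    (α₁₀ α₂₀ : SchwartzMap Vec ℂ) :
    ∃ α₁ α₂ : Vec → ℝ → ℂ,
      IsSol ED vF ϑ κ α₁₀ α₂₀ α₁ α₂ ∧
      ∀ β₁ β₂ : Vec → ℝ → ℂ, IsSol ED vF ϑ κ α₁₀ α₂₀ β₁ β₂ →
        ∀ X : Vec, ∀ T : ℝ, 0 ≤ T → β₁ X T = α₁ X T ∧ β₂ X T = α₂ X T := by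
  set c := vF / (2 * √ED) with hc
  let m : Vec → ℝ := fun X => ϑ * κ X / (2 * √ED)
  have hm : Mult m := by
    have e : m = fun X => (ϑ / (2 * √ED)) • κ X := by
      funext X; simp only [m, smul_eq_mul]; ring
    refine ⟨?_, fun k => ?_⟩
    · rw [e]; exact hκ_smooth.const_smul _
    · obtain ⟨C, hC⟩ := hκ_bdd k
      refine ⟨‖ϑ / (2 * √ED)‖ * C, fun x => ?_⟩
      rw [e, iteratedFDeriv_const_smul_apply'
        (hκ_smooth.of_le (by exact_mod_cast le_top)).contDiffAt, norm_smul]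
      exact mul_le_mul_of_nonneg_left (hC x) (norm_nonneg _)
  obtain ⟨u, hu0, hu⟩ := exists_evolution (diracσ_symm c) diracJ_skew hm
    (postcompCLM (incl 0) α₁₀ + postcompCLM (incl 1) α₂₀)
  have hsm : ContDiff ℝ ∞ (fun p : Vec × ℝ => u p.2 p.1) :=
    contDiff_infty.2 fun n => contDiff_of_WD hu n Spinor (.id ℝ _)
  have hex : IsSol ED vF ϑ κ α₁₀ α₂₀ (fun X T => u T X 0) (fun X T => u T X 1) := by
    refine ⟨((comp 0).contDiff.comp hsm).contDiffOn, ((comp 1).contDiff.comp hsm).contDiffOn,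
      fun T _ => ⟨⟨postcompCLM (comp 0) (u T), fun X => rfl⟩,
        ⟨postcompCLM (comp 1) (u T), fun X => rfl⟩⟩, fun X T _ => ?_, fun X => ?_⟩
    · have hd : DifferentiableAt ℝ (fun p : Vec × ℝ => u p.2 p.1) (X, T) :=
        hsm.differentiable (by simp) _
      refine (diracSystem_iff hd c (m X)).2 ?_
      have ht : fderiv ℝ (fun p : Vec × ℝ => u p.2 p.1) (X, T) (0, 1) =
          opG (diracσ c) diracJ m (u T) X := by
        have h1 : HasDerivAt (fun t : ℝ => (X, t)) ((0 : Vec), (1 : ℝ)) T :=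
          (hasDerivAt_const T X).prodMk (hasDerivAt_id T)
        exact (hd.hasFDerivAt.comp_hasDerivAt T h1).unique (hu _ (evalS X) T)
      have hx : ∀ j, fderiv ℝ (fun p : Vec × ℝ => u p.2 p.1) (X, T) (eb j, 0) =
          opP j (u T) X := fun j => by
        have h1 : HasFDerivAt (fun Y : Vec => (Y, T)) (ContinuousLinearMap.inl ℝ Vec ℝ) X :=
          hasFDerivAt_prodMk_left X T
        exact congrArg (fun L : Vec →L[ℝ] Spinor => L (eb j))
          (hd.hasFDerivAt.comp X h1).fderiv.symm
      rw [ht, hx, hx, opG_eq, Fin.sum_univ_two]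
      simp only [add_apply, opS_apply, opM_apply hm]
    · change (u 0 X) 0 = _ ∧ (u 0 X) 1 = _
      rw [hu0]
      simp
  refine ⟨_, _, hex, fun β₁ β₂ hβ X T hT => ?_⟩
  set α₁ : Vec → ℝ → ℂ := fun X T => u T X 0
  set α₂ : Vec → ℝ → ℂ := fun X T => u T X 1
  have hcd : ContDiffOn ℝ ∞ (spinor β₁ β₂ - spinor α₁ α₂) (univ ×ˢ Ici 0) :=
    (spinor_contDiffOn hβ.1 hβ.2.1).sub (spinor_contDiffOn hex.1 hex.2.1)
  have hz := dirac_unique (diracσ_symm c) diracJ_skew (m := m) (spinor β₁ β₂ - spinor α₁ α₂)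
    hcd.continuousOn
    ((hcd.mono (prod_mono_right Ioi_subset_Ici_self)).of_le (by exact_mod_cast le_top)) ?_ ?_ X hT
  · have e0 := congrArg (fun v : Spinor => v 0) hz
    have e1 := congrArg (fun v : Spinor => v 1) hz
    simp only [Pi.sub_apply, PiLp.sub_apply, spinor_zero, spinor_one, PiLp.zero_apply,
      sub_eq_zero] at e0 e1
    exact ⟨e0, e1⟩
  · intro X T hT
    obtain ⟨d1, e1⟩ := spinor_eq hβ (X := X) hT
    obtain ⟨d2, e2⟩ := spinor_eq hex (X := X) hT
    rw [fderiv_sub d1 d2]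
    simp only [sub_apply, Pi.sub_apply, map_sub, smul_sub, e1, e2, hc, m]
    abel
  · intro X
    simp only [Pi.sub_apply, spinor, (hβ.2.2.2.2 X).1, (hβ.2.2.2.2 X).2, (hex.2.2.2.2 X).1,
      (hex.2.2.2.2 X).2, sub_self]
end
end

section
/- For every q₁ > 0 there exists a constant C > 0 such that for every k ∈ Ω* with |k − K| ≥ q₁ and every m = (m₁, m₂) ∈ ℤ², one has |m₁k₁ + m₂k₂ + k − K| ≥ C·(1 + |m|), where |m| = √(m₁² + m₂²). -/
/-!
In the basis `k₁, k₂` the vector `m₁k₁ + m₂k₂ + k - K` has coordinates `a = m₁ + (θ₁ - 1/3)` and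
`b = m₂ + (θ₂ + 1/3)`, and its squared length is `(16π²/3)(a² - ab + b²) ≥ 24 (a² + b²)`.
Since `θ₁ - 1/3 ∈ [-5/6, 1/6]` and `θ₂ + 1/3 ∈ [-1/6, 5/6]`, both shifts stay away from every nonzero
integer, so `|a| ≥ |m₁|/6` and `|b| ≥ |m₂|/6` (`int_shift_sq`). Hence for `m ≠ 0` the length is at
least `|m|/3 ≥ (1 + |m|)/6`, while for `m = 0` it is at least `q₁` by hypothesis. The constant
`C = min q₁ (1/6)` therefore works.
-/

noncomputable section

/-- The Euclidean norm on ℝ². -/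
def enorm2 (x : Vec) : ℝ := Real.sqrt (x 0 ^ 2 + x 1 ^ 2)

/-- Dual lattice vector k₁. -/
def dualk₁ : Vec := (4 * Real.sqrt 3 * Real.pi / 3) • ![1 / 2, Real.sqrt 3 / 2]

/-- Dual lattice vector k₂. -/
def dualk₂ : Vec := (4 * Real.sqrt 3 * Real.pi / 3) • ![1 / 2, -(Real.sqrt 3 / 2)]

/-- The high-symmetry point K = (k₁ − k₂)/3. -/
def Kpt : Vec := (3:ℝ)⁻¹ • (dualk₁ - dualk₂)

/-- The fundamental dual cell Ω*. -/
def dualCell : Set Vec :=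
  {k | ∃ θ₁ ∈ Set.Icc (-(1/2) : ℝ) (1/2), ∃ θ₂ ∈ Set.Icc (-(1/2) : ℝ) (1/2),
    k = θ₁ • dualk₁ + θ₂ • dualk₂}

lemma int_shift_sq (m : ℤ) (t : ℝ) (h₁ : -(5 / 6) ≤ t) (h₂ : t ≤ 1 / 6) :
    (m : ℝ) ^ 2 ≤ 36 * ((m : ℝ) + t) ^ 2 := by
  rcases lt_trichotomy m 0 with h | h | h
  · have h' : (m : ℝ) ≤ -1 := by exact_mod_cast (by omega : m ≤ -1)
    nlinarith
  · subst h
    push_cast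
    nlinarith [sq_nonneg t]
  · have h' : (1 : ℝ) ≤ m := by exact_mod_cast h
    nlinarith

lemma sq_add_sq_le_dual (a b : ℝ) :
    24 * (a ^ 2 + b ^ 2) ≤
      (a • dualk₁ + b • dualk₂) 0 ^ 2 + (a • dualk₁ + b • dualk₂) 1 ^ 2 := by
  have h3 : Real.sqrt 3 ^ 2 = 3 := Real.sq_sqrt (by norm_num)
  have h4 : Real.sqrt 3 ^ 4 = 9 := by
    rw [show Real.sqrt 3 ^ 4 = (Real.sqrt 3 ^ 2) ^ 2 by ring, h3]; norm_num
  have e : (a • dualk₁ + b • dualk₂) 0 ^ 2 + (a • dualk₁ + b • dualk₂) 1 ^ 2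
      = 16 / 3 * Real.pi ^ 2 * (a ^ 2 - a * b + b ^ 2) := by
    simp [dualk₁, dualk₂]
    ring_nf
    simp only [h3, h4]
    ring
  have hpi : (9 : ℝ) ≤ Real.pi ^ 2 := by nlinarith [Real.pi_gt_three]
  have hq : (a ^ 2 + b ^ 2) / 2 ≤ a ^ 2 - a * b + b ^ 2 := by nlinarith [sq_nonneg (a - b)]
  rw [e]
  nlinarith [sq_nonneg a, sq_nonneg b]

/-- For every q₁ > 0 there is C > 0 such that for all
k ∈ Ω* with |k − K| ≥ q₁ and all m ∈ ℤ²,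
|m₁k₁ + m₂k₂ + k − K| ≥ C(1 + |m|). -/
theorem stmt10 : ∀ q₁ : ℝ, 0 < q₁ → ∃ C : ℝ, 0 < C ∧
    ∀ k ∈ dualCell, q₁ ≤ enorm2 (k - Kpt) →
      ∀ m₁ m₂ : ℤ,
        C * (1 + Real.sqrt ((m₁ : ℝ) ^ 2 + (m₂ : ℝ) ^ 2)) ≤
          enorm2 ((m₁ : ℝ) • dualk₁ + (m₂ : ℝ) • dualk₂ + k - Kpt) := by
  intro q₁ hq
  refine ⟨min q₁ (1 / 6), by positivity, ?_⟩
  rintro k ⟨θ₁, ⟨h1, h1'⟩, θ₂, ⟨h2, h2'⟩, rfl⟩ hk m₁ m₂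
  by_cases h0 : m₁ = 0 ∧ m₂ = 0
  · obtain ⟨rfl, rfl⟩ := h0
    simpa using Or.inl hk
  have hvec : (m₁ : ℝ) • dualk₁ + (m₂ : ℝ) • dualk₂ + (θ₁ • dualk₁ + θ₂ • dualk₂) - Kpt
      = ((m₁ : ℝ) + (θ₁ - 1 / 3)) • dualk₁ + ((m₂ : ℝ) + (θ₂ + 1 / 3)) • dualk₂ := by
    unfold Kpt
    module
  have ha := int_shift_sq m₁ (θ₁ - 1 / 3) (by linarith) (by linarith)
  -- The shift of `m₂` lies in `[-1/6, 5/6]`, so the lemma applies after a change of sign.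
  have hb := int_shift_sq (-m₂) (-(θ₂ + 1 / 3)) (by linarith) (by linarith)
  push_cast at hb
  have hm : (1 : ℝ) ≤ (m₁ : ℝ) ^ 2 + (m₂ : ℝ) ^ 2 := by
    have : 1 ≤ m₁ ^ 2 + m₂ ^ 2 := by
      by_contra hc
      exact h0 ⟨by nlinarith [sq_nonneg m₁, sq_nonneg m₂], by nlinarith [sq_nonneg m₁, sq_nonneg m₂]⟩
    exact_mod_cast this
  set s := Real.sqrt ((m₁ : ℝ) ^ 2 + (m₂ : ℝ) ^ 2) with hs
  have hs1 : 1 ≤ s := Real.one_le_sqrt.mpr hm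
  have hs2 : s ^ 2 = (m₁ : ℝ) ^ 2 + (m₂ : ℝ) ^ 2 := Real.sq_sqrt (by positivity)
  have hC : min q₁ (1 / 6) * (1 + s) ≤ s / 3 := by
    have := mul_le_mul_of_nonneg_right (min_le_right q₁ (1 / 6)) (by linarith : 0 ≤ 1 + s)
    linarith
  refine hC.trans ?_
  rw [hvec]
  refine Real.le_sqrt_of_sq_le (le_trans ?_ (sq_add_sq_le_dual _ _))
  nlinarith
end
end
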